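/- arXiv:math/0103019 — 5 statements merged into one kernel-verified Lean document; each statement's English description precedes it below -/
import Mathlib

section
/- For a finitely generated projective Hopf algebra H over a commutative ring k, the k-module of left integrals ∫ℓ_{H*} = {f ∈ H* : gf = g(1)f for all g ∈ H*} is an invertible k-module (finitely generated projective of constant rank 1) and a k-direct summand of H*. -/
open scoped TensorProduct

/-- The convolution product on the dual of a coalgebra: `(g * f)(a) = Σ g(a₍₁₎) f(a₍₂₎)`. -/
noncomputable def conv (k H : Type*) [CommRing k] [AddCommGroup H] [Module k H]
    [Coalgebra k H] (g f : Module.Dual k H) : Module.Dual k H :=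
  LinearMap.mul' k k ∘ₗ TensorProduct.map g f ∘ₗ Coalgebra.comul


namespace HopfInt

open TensorProduct Coalgebra HopfAlgebra WithConv

section algebra
variable {k H : Type*} [CommRing k] [Ring H] [HopfAlgebra k H]

/-- Composition of an algebra map with the antipode is a right convolution inverse. -/
lemma conv_right_inv {B : Type*} [Ring B] [Algebra k B] (φ : H →ₐ[k] B) :
    toConv φ.toLinearMap * toConv (φ.toLinearMap ∘ₗ antipode k) = 1 := by
  ext c
  rw [(ℛ k c).convMul_apply]
  simp only [LinearMap.comp_apply, AlgHom.toLinearMap_apply, ← map_mul, ← map_sum]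
  rw [sum_mul_antipode_eq_algebraMap_counit (ℛ k c)]
  simp

/-- Composition of an algebra map with the antipode is a left convolution inverse. -/
lemma conv_left_inv {B : Type*} [Ring B] [Algebra k B] (φ : H →ₐ[k] B) :
    toConv (φ.toLinearMap ∘ₗ antipode k) * toConv φ.toLinearMap = 1 := by
  ext c
  rw [(ℛ k c).convMul_apply]
  simp only [LinearMap.comp_apply, AlgHom.toLinearMap_apply, ← map_mul, ← map_sum]
  rw [sum_antipode_mul_eq_algebraMap_counit (ℛ k c)]
  simp

lemma conv_incl :
    toConv (Algebra.TensorProduct.includeLeft : H →ₐ[k] H ⊗[k] H).toLinearMap *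
      toConv (Algebra.TensorProduct.includeRight : H →ₐ[k] H ⊗[k] H).toLinearMap =
    toConv (Bialgebra.comulAlgHom k H).toLinearMap := by
  ext c
  rw [(ℛ k c).convMul_apply]
  simp [(ℛ k c).eq]

lemma conv_L1 :
    toConv ((Bialgebra.comulAlgHom k H).toLinearMap ∘ₗ antipode k) *
      toConv (Algebra.TensorProduct.includeLeft : H →ₐ[k] H ⊗[k] H).toLinearMap =
    toConv ((Algebra.TensorProduct.includeRight : H →ₐ[k] H ⊗[k] H).toLinearMap ∘ₗ antipode k) := by
  have h1 := conv_incl (k := k) (H := H)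
  have h2 := conv_right_inv (k := k) (Algebra.TensorProduct.includeRight : H →ₐ[k] H ⊗[k] H)
  have h3 := conv_left_inv (k := k) (Bialgebra.comulAlgHom k H)
  generalize toConv (Algebra.TensorProduct.includeLeft : H →ₐ[k] H ⊗[k] H).toLinearMap = a at *
  generalize toConv (Algebra.TensorProduct.includeRight : H →ₐ[k] H ⊗[k] H).toLinearMap = b at *
  rw [← h1] at h3
  rw [← mul_one a, ← h2, ← mul_assoc, ← mul_assoc, mul_assoc _ a b, h3, one_mul]

lemma conv_L2 :
    toConv (Algebra.TensorProduct.includeRight : H →ₐ[k] H ⊗[k] H).toLinearMap *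
      toConv ((Bialgebra.comulAlgHom k H).toLinearMap ∘ₗ antipode k) =
    toConv ((Algebra.TensorProduct.includeLeft : H →ₐ[k] H ⊗[k] H).toLinearMap ∘ₗ antipode k) := by
  have h1 := conv_incl (k := k) (H := H)
  have h2 := conv_left_inv (k := k) (Algebra.TensorProduct.includeLeft : H →ₐ[k] H ⊗[k] H)
  have h3 := conv_right_inv (k := k) (Bialgebra.comulAlgHom k H)
  generalize toConv (Algebra.TensorProduct.includeLeft : H →ₐ[k] H ⊗[k] H).toLinearMap = a at *
  generalize toConv (Algebra.TensorProduct.includeRight : H →ₐ[k] H ⊗[k] H).toLinearMap = b at *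
  rw [← h1] at h3
  rw [← one_mul b, ← h2, mul_assoc, mul_assoc, ← mul_assoc a b, h3, mul_one]

lemma sum_L1 (h : H) :
    ∑ i ∈ (ℛ k h).index, comul (R := k) (antipode k ((ℛ k h).left i)) * ((ℛ k h).right i ⊗ₜ[k] 1)
      = (1 : H) ⊗ₜ[k] antipode k h := by
  have := congr($(conv_L1 (k := k) (H := H)).ofConv h)
  rw [(ℛ k h).convMul_apply] at this
  simpa using this

lemma sum_L2 (h : H) :
    ∑ i ∈ (ℛ k h).index, ((1 : H) ⊗ₜ[k] (ℛ k h).left i) *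
      comul (R := k) (antipode k ((ℛ k h).right i)) = antipode k h ⊗ₜ[k] (1 : H) := by
  have := congr($(conv_L2 (k := k) (H := H)).ofConv h)
  rw [(ℛ k h).convMul_apply] at this
  simpa using this

end algebra

section hopfmodule
variable {k H M : Type*} [CommRing k] [Ring H] [HopfAlgebra k H] [AddCommGroup M] [Module k M]

/-- diagonal action -/
noncomputable def diag (A : M →ₗ[k] H →ₗ[k] M) : M ⊗[k] H →ₗ[k] H ⊗[k] H →ₗ[k] M ⊗[k] H :=
  TensorProduct.curry ((TensorProduct.map (TensorProduct.lift A) (LinearMap.mul' k H)) ∘ₗ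
    (TensorProduct.tensorTensorTensorComm k M H H H).toLinearMap)

lemma diag_tmul (A : M →ₗ[k] H →ₗ[k] M) (m : M) (a : H) (u : H ⊗[k] H) :
    diag A (m ⊗ₜ a) u = (A m).rTensor H ((1 ⊗ₜ a) * u) := by
  induction u with
  | zero => simp
  | add x y hx hy => simp [hx, hy, mul_add]
  | tmul c d => simp [diag]

/-- A right Hopf module. -/
structure HopfMod (A : M →ₗ[k] H →ₗ[k] M) (ρ : M →ₗ[k] M ⊗[k] H) : Prop where
  act_one : ∀ m, A m 1 = m
  act_mul : ∀ m a b, A (A m a) b = A m (a * b)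
  counit : ∀ m, (counit (R := k) (A := H)).lTensor M (ρ m) = m ⊗ₜ 1
  coassoc : ∀ m, TensorProduct.assoc k M H H (ρ.rTensor H (ρ m)) = comul.lTensor M (ρ m)
  compat : ∀ m h, ρ (A m h) = diag A (ρ m) (comul h)

/-- projection to coinvariants -/
noncomputable def proj (A : M →ₗ[k] H →ₗ[k] M) (ρ : M →ₗ[k] M ⊗[k] H) : M →ₗ[k] M :=
  TensorProduct.lift A ∘ₗ (antipode k).lTensor M ∘ₗ ρ

/-- coinvariants -/
noncomputable def coinv (ρ : M →ₗ[k] M ⊗[k] H) : Submodule k M :=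
  LinearMap.eqLocus ρ ((TensorProduct.mk k M H).flip 1)

lemma mem_coinv {ρ : M →ₗ[k] M ⊗[k] H} {m : M} : m ∈ coinv ρ ↔ ρ m = m ⊗ₜ 1 := Iff.rfl

variable {A : M →ₗ[k] H →ₗ[k] M} {ρ : M →ₗ[k] M ⊗[k] H}

lemma proj_mem (hM : HopfMod A ρ) (m : M) : proj A ρ m ∈ coinv ρ := by
  rw [mem_coinv]
  let Γ : M ⊗[k] (H ⊗[k] H) →ₗ[k] M ⊗[k] H :=
    TensorProduct.lift (diag A) ∘ₗ (comul ∘ₗ antipode k).lTensor (M ⊗[k] H) ∘ₗ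
      (TensorProduct.assoc k M H H).symm.toLinearMap
  have h1 : ∀ t : M ⊗[k] H, ρ (TensorProduct.lift A ((antipode k).lTensor M t)) =
      Γ (TensorProduct.assoc k M H H (ρ.rTensor H t)) := by
    intro t
    induction t with
    | zero => simp
    | add x y hx hy => simp only [map_add, hx, hy]
    | tmul m h => simp [Γ, hM.compat]
  have h2 : ∀ t : M ⊗[k] H, Γ (comul.lTensor M t) =
      TensorProduct.lift A ((antipode k).lTensor M t) ⊗ₜ 1 := by
    intro t
    induction t with
    | zero => simp
    | add x y hx hy => simp only [map_add, hx, hy, TensorProduct.add_tmul]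
    | tmul m h =>
      have := congr((A m).rTensor H $(sum_L2 (k := k) h))
      simp only [map_sum, LinearMap.rTensor_tmul] at this
      simp only [LinearMap.lTensor_tmul, TensorProduct.lift.tmul]
      rw [← this, ← (ℛ k h).eq]
      simp [Γ, TensorProduct.tmul_sum, diag_tmul]
  change ρ (TensorProduct.lift A ((antipode k).lTensor M (ρ m))) = _
  rw [h1, hM.coassoc, h2]
  rfl

lemma act_proj (hM : HopfMod A ρ) (m : M) :
    TensorProduct.lift A ((proj A ρ).rTensor H (ρ m)) = m := by
  have h1 : ∀ t : M ⊗[k] H, TensorProduct.lift A ((proj A ρ).rTensor H t) =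
      TensorProduct.lift A ((LinearMap.mul' k H ∘ₗ (antipode k).rTensor H).lTensor M
        (TensorProduct.assoc k M H H (ρ.rTensor H t))) := by
    intro t
    induction t with
    | zero => simp
    | add x y hx hy => simp only [map_add, hx, hy]
    | tmul m h =>
      simp only [LinearMap.rTensor_tmul, proj, LinearMap.comp_apply, TensorProduct.lift.tmul]
      generalize ρ m = s
      induction s with
      | zero => simp
      | add x y hx hy => simp only [map_add, hx, hy, TensorProduct.add_tmul, LinearMap.add_apply]
      | tmul m' a => simp [hM.act_mul]
  rw [h1, hM.coassoc, ← LinearMap.comp_apply (LinearMap.lTensor M _), ← LinearMap.lTensor_comp]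
  have h2 : (LinearMap.mul' k H ∘ₗ (antipode k).rTensor H) ∘ₗ comul =
      Algebra.linearMap k H ∘ₗ Coalgebra.counit := by
    ext h; simp
  rw [h2, LinearMap.lTensor_comp, LinearMap.comp_apply, hM.counit]
  simp [hM.act_one]

lemma coact_coinv (hM : HopfMod A ρ) {m : M} (hm : m ∈ coinv ρ) (h : H) :
    ρ (A m h) = (A m).rTensor H (comul h) := by
  rw [hM.compat, mem_coinv.1 hm, diag_tmul, ← Algebra.TensorProduct.one_def, one_mul]

lemma proj_act (hM : HopfMod A ρ) {m : M} (hm : m ∈ coinv ρ) (h : H) :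
    proj A ρ (A m h) = Coalgebra.counit (R := k) h • m := by
  simp only [proj, LinearMap.comp_apply, coact_coinv hM hm]
  rw [← (ℛ k h).eq]
  simp only [map_sum, LinearMap.rTensor_tmul, LinearMap.lTensor_tmul, TensorProduct.lift.tmul,
    hM.act_mul]
  rw [← map_sum, sum_mul_antipode_eq_smul, map_smul, hM.act_one]

lemma proj_coinv (hM : HopfMod A ρ) {m : M} (hm : m ∈ coinv ρ) : proj A ρ m = m := by
  have := proj_act hM hm 1
  simpa [hM.act_one] using this

/-- The projection, as a map onto the coinvariants. -/
noncomputable def projJ (hM : HopfMod A ρ) : M →ₗ[k] coinv ρ :=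
  (proj A ρ).codRestrict (coinv ρ) (proj_mem hM)

/-- Fundamental theorem of Hopf modules. -/
noncomputable def fundEquiv (hM : HopfMod A ρ) : (coinv ρ) ⊗[k] H ≃ₗ[k] M :=
  LinearEquiv.ofLinearMap (TensorProduct.lift A ∘ₗ (coinv ρ).subtype.rTensor H)
    ((projJ hM).rTensor H ∘ₗ ρ)
    (by
      ext m
      have := act_proj hM m
      simp only [LinearMap.comp_apply, LinearMap.id_apply]
      rw [← LinearMap.comp_apply (LinearMap.rTensor H _), ← LinearMap.rTensor_comp]
      exact this)
    (by
      apply TensorProduct.ext'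
      intro m h
      simp only [LinearMap.comp_apply, LinearMap.id_apply, LinearMap.rTensor_tmul,
        TensorProduct.lift.tmul, Submodule.subtype_apply]
      rw [coact_coinv hM m.2, ← LinearMap.comp_apply (LinearMap.rTensor H _),
        ← LinearMap.rTensor_comp]
      have : projJ hM ∘ₗ A m = (LinearMap.toSpanSingleton k _ m) ∘ₗ Coalgebra.counit := by
        ext h
        simpa [projJ] using proj_act hM m.2 h
      rw [this, LinearMap.rTensor_comp, LinearMap.comp_apply, rTensor_counit_comul]
      simp)

lemma fundEquiv_tmul (hM : HopfMod A ρ) (m : coinv ρ) (h : H) :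
    fundEquiv hM (m ⊗ₜ h) = A m h := rfl

end hopfmodule

section dual
variable {k H : Type*} [CommRing k] [Ring H] [HopfAlgebra k H]

variable (k H) in
/-- right action of `H` on the dual through the antipode -/
noncomputable def dact : Module.Dual k H →ₗ[k] H →ₗ[k] Module.Dual k H :=
  LinearMap.mk₂ k (fun f h => f ∘ₗ LinearMap.mulRight k (antipode k h))
    (by intros; ext; simp) (by intros; ext; simp) (by intros; ext; simp [mul_add])
    (by intros; ext; simp)

lemma dact_apply (f : Module.Dual k H) (h x : H) : dact k H f h x = f (x * antipode k h) := rfl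

variable (k H) in
/-- `f ↦ (y ↦ y₁ f(y₂))` -/
noncomputable def hit : Module.Dual k H →ₗ[k] H →ₗ[k] H :=
  LinearMap.mk₂ k (fun f y => TensorProduct.rid k H (f.lTensor H (comul y)))
    (by intros; simp [LinearMap.lTensor_add]) (by intros; simp [LinearMap.lTensor_smul])
    (by intros; simp) (by intros; simp)

lemma hit_apply (f : Module.Dual k H) (y : H) :
    hit k H f y = TensorProduct.rid k H (f.lTensor H (comul y)) := rfl

variable [Module.Finite k H] [Module.Projective k H]

variable (k H) in
/-- right coaction on the dual -/
noncomputable def dcoact : Module.Dual k H →ₗ[k] Module.Dual k H ⊗[k] H :=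
  (LinearEquiv.ofBijective (dualTensorHom k H H) dualTensorHom_bijective).symm.toLinearMap ∘ₗ
    hit k H

lemma dualTensorHom_dcoact (f : Module.Dual k H) : dualTensorHom k H H (dcoact k H f) = hit k H f :=
  (LinearEquiv.ofBijective (dualTensorHom k H H) dualTensorHom_bijective).apply_symm_apply _

lemma dual_hopfMod : HopfMod (dact k H) (dcoact k H) where
  act_one f := by ext x; simp [dact_apply]
  act_mul f a b := by
    ext x; simp [dact_apply, antipode_mul_antidistrib, mul_assoc]
  counit f := by
    apply (dualTensorHom_bijective (R := k) (M := H) (N := k)).1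
    rw [← LinearMap.comp_apply (dualTensorHom k H k), dualTensorHom_comp_lTensor]
    simp only [LinearMap.comp_apply, dualTensorHom_dcoact]
    ext y
    simp only [LinearMap.compRight_apply, LinearMap.comp_apply, hit_apply]
    rw [← (ℛ k y).eq]
    simp only [map_sum, LinearMap.lTensor_tmul, TensorProduct.rid_tmul, map_smul,
      dualTensorHom_apply, smul_eq_mul, mul_one]
    conv_rhs => rw [← sum_counit_smul (ℛ k y)]
    simp [mul_comm]
  coassoc f := by
    apply (dualTensorHom_bijective (R := k) (M := H) (N := H ⊗[k] H)).1
    ext y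
    have h1 : ∀ t : Module.Dual k H ⊗[k] H, dualTensorHom k H (H ⊗[k] H)
        (TensorProduct.assoc k _ H H ((dcoact k H).rTensor H t)) y =
        (dualTensorHom k H H t).lTensor H (comul y) := by
      intro t
      induction t with
      | zero => simp
      | add x y hx hy => simp only [map_add, LinearMap.add_apply, hx, hy, LinearMap.lTensor_add]
      | tmul g h =>
        have h2 : ∀ s : Module.Dual k H ⊗[k] H, dualTensorHom k H (H ⊗[k] H)
            (TensorProduct.assoc k _ H H (s ⊗ₜ h)) y = dualTensorHom k H H s y ⊗ₜ h := by
          intro s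
          induction s with
          | zero => simp
          | add x y hx hy => simp only [map_add, LinearMap.add_apply, hx, hy, add_tmul]
          | tmul g h => simp [smul_tmul']
        rw [LinearMap.rTensor_tmul, h2, dualTensorHom_dcoact, hit_apply, ← (ℛ k y).eq]
        simp [sum_tmul, smul_tmul']
    have h2 : ∀ t : Module.Dual k H ⊗[k] H, dualTensorHom k H (H ⊗[k] H)
        (comul.lTensor _ t) y = comul (dualTensorHom k H H t y) := by
      intro t
      induction t with
      | zero => simp
      | add x y hx hy => simp only [map_add, LinearMap.add_apply, hx, hy]
      | tmul g h => simp
    rw [h1, h2, dualTensorHom_dcoact]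
    have h3 : ∀ u : H ⊗[k] H, comul (TensorProduct.rid k H (f.lTensor H u)) =
        (TensorProduct.rid k H ∘ₗ f.lTensor H).lTensor H
          (TensorProduct.assoc k H H H (comul.rTensor H u)) := by
      intro u
      induction u with
      | zero => simp
      | add x y hx hy => simp only [map_add, hx, hy]
      | tmul a b =>
        simp only [LinearMap.lTensor_tmul, TensorProduct.rid_tmul, map_smul, LinearMap.rTensor_tmul]
        generalize (comul a : H ⊗[k] H) = v
        induction v with
        | zero => simp
        | add x y hx hy => simp only [map_add, hx, hy, add_tmul, smul_add]
        | tmul c d => simp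
    have h4 : hit k H f = (TensorProduct.rid k H ∘ₗ f.lTensor H) ∘ₗ comul := rfl
    rw [hit_apply, h3, coassoc_apply, h4, LinearMap.lTensor_comp, LinearMap.comp_apply]
  compat f h := by
    apply (dualTensorHom_bijective (R := k) (M := H) (N := H)).1
    ext y
    have h1 : ∀ (t : Module.Dual k H ⊗[k] H) (a b : H),
        dualTensorHom k H H (diag (dact k H) t (a ⊗ₜ b)) y =
          dualTensorHom k H H t (y * antipode k a) * b := by
      intro t a b
      induction t with
      | zero => simp
      | add x y hx hy => simp only [map_add, LinearMap.add_apply, hx, hy, add_mul]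
      | tmul g h => simp [diag, dact_apply]
    have h2 : ∀ (u : H ⊗[k] H) (b : H), TensorProduct.rid k H (f.lTensor H u) * b =
        TensorProduct.rid k H (f.lTensor H (u * (b ⊗ₜ 1))) := by
      intro u b
      induction u with
      | zero => simp
      | add x y hx hy => simp only [map_add, hx, hy, add_mul]
      | tmul c d => simp
    have h3 : ∀ u : H ⊗[k] H, (dact k H f h).lTensor H u =
        f.lTensor H (u * ((1 : H) ⊗ₜ[k] antipode k h)) := by
      intro u
      induction u with
      | zero => simp
      | add x y hx hy => simp only [map_add, hx, hy, add_mul]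
      | tmul c d => simp [dact_apply]
    conv_rhs => rw [← (ℛ k h).eq]
    simp only [map_sum, LinearMap.sum_apply, h1]
    rw [dualTensorHom_dcoact, dualTensorHom_dcoact]
    simp only [hit_apply, h2, h3]
    rw [← sum_L1]
    simp only [Finset.mul_sum, map_sum, Bialgebra.comul_mul, mul_assoc]

lemma mem_coinv_dual (f : Module.Dual k H) :
    f ∈ coinv (dcoact k H) ↔ ∀ g : Module.Dual k H, conv k H g f = g 1 • f := by
  have key : f ∈ coinv (dcoact k H) ↔ ∀ y, hit k H f y = f y • (1 : H) := by
    rw [mem_coinv, ← (dualTensorHom_bijective (R := k) (M := H) (N := H)).1.eq_iff,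
      dualTensorHom_dcoact, LinearMap.ext_iff]
    rfl
  have hg : ∀ (g : Module.Dual k H) y, conv k H g f y = g (hit k H f y) := by
    intro g y
    simp only [conv, hit_apply, LinearMap.comp_apply]
    rw [← (ℛ k y).eq]
    simp [mul_comm]
  rw [key]
  constructor
  · intro h g
    ext y
    rw [hg, h]
    simp [mul_comm]
  · intro h y
    rw [← sub_eq_zero, ← Module.forall_dual_apply_eq_zero_iff k]
    intro g
    have := congr($(h g) y)
    rw [hg] at this
    simp [this, mul_comm]

lemma contractRight_surj : Function.Surjective (contractRight k (coinv (dcoact k H))) := by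
  rw [← LinearMap.range_eq_top, Ideal.eq_top_iff_one]
  have h1 : ∀ t : coinv (dcoact k H) ⊗[k] H,
      fundEquiv dual_hopfMod t 1 ∈ LinearMap.range (contractRight k (coinv (dcoact k H))) := by
    intro t
    induction t with
    | zero => simp
    | add x y hx hy => rw [map_add]; exact add_mem hx hy
    | tmul m h =>
      rw [fundEquiv_tmul, dact_apply]
      exact ⟨m ⊗ₜ (Module.Dual.eval k H (1 * antipode k h) ∘ₗ (coinv (dcoact k H)).subtype), by simp⟩
  have := h1 ((fundEquiv dual_hopfMod).symm (Coalgebra.counit (R := k)))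
  rw [LinearEquiv.apply_symm_apply] at this
  simpa using this

end dual

section rank
open Module

lemma rankAtStalk_dual {R M : Type*} [CommRing R] [AddCommGroup M] [Module R M]
    [Module.Finite R M] [Module.Projective R M] (p : PrimeSpectrum R) :
    rankAtStalk (R := R) (Dual R M) p = rankAtStalk (R := R) M p := by
  have : Module.FinitePresentation R M := Module.finitePresentation_of_projective R M
  have e := Module.FinitePresentation.linearEquivMapExtendScalars (R := R) (M := M) (N := R)
    p.asIdeal.primeCompl
  have : Module.Free (Localization.AtPrime p.asIdeal) (LocalizedModule p.asIdeal.primeCompl M) :=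
    Module.free_of_flat_of_isLocalRing
  have e2 := (LinearEquiv.extendScalarsOfIsLocalization p.asIdeal.primeCompl
    (Localization.AtPrime p.asIdeal) e)
  have : Module.Free (Localization.AtPrime p.asIdeal) (LocalizedModule p.asIdeal.primeCompl R) :=
    Module.free_of_flat_of_isLocalRing
  have : Nontrivial R := p.nontrivial
  have h1 := congrFun (rankAtStalk_self (R := R)) p
  unfold rankAtStalk at h1 ⊢
  refine e2.finrank_eq.trans ?_
  refine (Module.finrank_linearMap _ _ _ _).trans ?_
  rw [h1]
  simp

lemma contractRight_bij {R M : Type*} [CommRing R] [AddCommGroup M] [Module R M]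
    [Module.Finite R M] [Module.Projective R M]
    (hs : Function.Surjective (contractRight R M))
    (hr : ∀ p, rankAtStalk (R := R) M p = 1) : Function.Bijective (contractRight R M) := by
  refine Module.bijective_of_surjective_of_rankAtStalk_eq hs ?_
  intro m hm
  have : Nontrivial R := PrimeSpectrum.nontrivial ⟨m, hm.isPrime⟩
  rw [rankAtStalk_tensorProduct, Pi.mul_apply, rankAtStalk_dual, hr, rankAtStalk_self]
  rfl

lemma rank_one_of_equiv {R M N : Type*} [CommRing R] [AddCommGroup M] [Module R M]
    [Module.Finite R M] [Module.Projective R M] [AddCommGroup N] [Module R N]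
    [Module.Finite R N] [Module.Projective R N] (e : M ⊗[R] N ≃ₗ[R] Dual R N)
    (x : N) (hx : ∀ r : R, r • x = 0 → r = 0) (p : PrimeSpectrum R) :
    rankAtStalk (R := R) M p = 1 := by
  have h1 := congrFun (Module.rankAtStalk_eq_of_equiv e) p
  rw [Module.rankAtStalk_tensorProduct, Pi.mul_apply, rankAtStalk_dual] at h1
  have hpos : 0 < Module.rankAtStalk (R := R) N p := by
    rw [Module.rankAtStalk_pos_iff_mem_support, Module.mem_support_iff_exists_annihilator]
    refine ⟨x, fun r hr => ?_⟩
    rw [hx r (Submodule.mem_annihilator_span_singleton _ _ |>.1 hr)]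
    exact zero_mem _
  exact Nat.eq_of_mul_eq_mul_right hpos (by rw [h1, one_mul])

lemma contractRight_bij_sub {R M : Type*} [CommRing R] [AddCommGroup M] [Module R M]
    (J : Submodule R M) [Module.Finite R J] [Module.Projective R J]
    (hs : Function.Surjective (contractRight R J))
    (hr : ∀ p, rankAtStalk (R := R) J p = 1) : Function.Bijective (contractRight R J) :=
  contractRight_bij hs hr

end rank
end HopfInt

/-- For a finitely generated projective Hopf `k`-algebra `H`, the `k`-module of left
integrals in `H*`, namely `{f | g * f = g(1) f for all g}` (convolution product), is an
invertible `k`-module (f.g. projective of rank 1, i.e. with bijective evaluation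
`J ⊗ J* → k`) and a `k`-direct summand of `H*`. -/
theorem left_integrals_invertible (k H : Type*) [CommRing k] [Ring H] [HopfAlgebra k H]
    [Module.Finite k H] [Module.Projective k H] :
    ∃ J : Submodule k (Module.Dual k H),
      (↑J = {f : Module.Dual k H | ∀ g : Module.Dual k H, conv k H g f = g 1 • f}) ∧
      Module.Finite k ↥J ∧ Module.Projective k ↥J ∧
      Function.Bijective (contractRight k ↥J) ∧
      ∃ π : Module.Dual k H →ₗ[k] ↥J, ∀ x : ↥J, π ↑x = x := by
  have hM := HopfInt.dual_hopfMod (k := k) (H := H)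
  have hπ : ∀ x : ↥(HopfInt.coinv (HopfInt.dcoact k H)), HopfInt.projJ hM ↑x = x := fun x =>
    Subtype.ext (HopfInt.proj_coinv hM x.2)
  have hfin : Module.Finite k ↥(HopfInt.coinv (HopfInt.dcoact k H)) :=
    .of_surjective (HopfInt.projJ hM) fun x => ⟨x, hπ x⟩
  have hproj : Module.Projective k ↥(HopfInt.coinv (HopfInt.dcoact k H)) :=
    .of_split (Submodule.subtype _) (HopfInt.projJ hM) (LinearMap.ext hπ)
  refine ⟨HopfInt.coinv (HopfInt.dcoact k H), Set.ext HopfInt.mem_coinv_dual, hfin, hproj, ?_,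
    HopfInt.projJ hM, hπ⟩
  have hs := HopfInt.contractRight_surj (k := k) (H := H)
  refine HopfInt.contractRight_bij_sub (HopfInt.coinv (HopfInt.dcoact k H)) hs
    (HopfInt.rank_one_of_equiv (HopfInt.fundEquiv hM) 1 fun r hr => ?_)
  have := congr(Coalgebra.counit (R := k) $hr)
  simpa using this
end

section
/- The antipode S of a finitely generated projective Hopf algebra H over a commutative ring k is bijective. -/
open HopfAlgebra TensorProduct WithConv in
/-- Two algebra maps out of a Hopf algebra that agree on the image of the antipode are equal. -/
theorem algHom_eq_of_comp_antipode {k H B : Type*} [CommRing k] [Ring H] [HopfAlgebra k H]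
    [Ring B] [Algebra k B] (α β : H →ₐ[k] B)
    (h : ∀ x, α (antipode k x) = β (antipode k x)) : α = β := by
  have h1 : toConv α.toLinearMap * toConv (α.toLinearMap ∘ₗ antipode k) = 1 := by
    have := LinearMap.algHom_comp_convMul_distrib (R := k) (C := H) α (toConv LinearMap.id)
      (toConv (antipode k))
    rw [LinearMap.id_mul_antipode] at this
    apply WithConv.ofConv_injective
    refine Eq.trans this.symm ?_
    ext x
    simp [LinearMap.convOne_def]
  have h2 : toConv (β.toLinearMap ∘ₗ antipode k) * toConv β.toLinearMap = 1 := by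
    have := LinearMap.algHom_comp_convMul_distrib (R := k) (C := H) β (toConv (antipode k))
      (toConv LinearMap.id)
    rw [LinearMap.antipode_mul_id] at this
    apply WithConv.ofConv_injective
    refine Eq.trans this.symm ?_
    ext x
    simp [LinearMap.convOne_def]
  have h3 : α.toLinearMap ∘ₗ antipode k = β.toLinearMap ∘ₗ antipode k := LinearMap.ext h
  rw [h3] at h1
  have h4 := left_inv_eq_right_inv h1 h2
  have h5 := congrArg WithConv.ofConv h4
  exact AlgHom.toLinearMap_injective h5

open HopfAlgebra in
/-- The square of the antipode, as an algebra map. -/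
noncomputable def antipodeSq (k H : Type*) [CommRing k] [Ring H] [HopfAlgebra k H] :
    H →ₐ[k] H :=
  AlgHom.ofLinearMap (antipode k ∘ₗ antipode k) (by simp)
    (fun x y => by simp [antipode_mul_antidistrib])

open HopfAlgebra in
theorem algHom_eq_of_comp_antipodeSq {k H B : Type*} [CommRing k] [Ring H] [HopfAlgebra k H]
    [Ring B] [Algebra k B] (α β : H →ₐ[k] B)
    (h : ∀ x, α (antipodeSq k H x) = β (antipodeSq k H x)) : α = β := by
  apply algHom_eq_of_comp_antipode
  have := algHom_eq_of_comp_antipode ((AlgHom.op α).comp (antipodeAlgHomOp k H))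
    ((AlgHom.op β).comp (antipodeAlgHomOp k H)) (fun x => by
      have := h x
      simpa [antipodeSq] using this)
  intro x
  have := DFunLike.congr_fun this x
  simpa using this

theorem algHom_eq_of_comp_antipodeSq_pow {k H B : Type*} [CommRing k] [Ring H] [HopfAlgebra k H]
    [Ring B] [Algebra k B] (n : ℕ) (α β : H →ₐ[k] B)
    (h : ∀ x, α ((antipodeSq k H ^ n) x) = β ((antipodeSq k H ^ n) x)) : α = β := by
  induction n with
  | zero => ext x; simpa using h x
  | succ n ih =>
    apply ih
    intro x
    have := algHom_eq_of_comp_antipodeSq (α.comp (antipodeSq k H ^ n))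
      (β.comp (antipodeSq k H ^ n)) (fun y => by
        have := h y
        rw [pow_succ] at this
        exact this)
    exact DFunLike.congr_fun this x

open HopfAlgebra in
theorem antipode_injective_of_artinian (k H : Type*) [CommRing k] [IsArtinianRing k] [Ring H]
    [HopfAlgebra k H] [Module.Finite k H] : Function.Injective (antipode k (A := H)) := by
  obtain ⟨n, hn, h0⟩ := ((LinearMap.eventually_isCompl_ker_pow_range_pow
    ((antipodeSq k H).toLinearMap : Module.End k H)).and
    (Filter.eventually_ne_atTop 0)).exists
  have hpow : ∀ x, (((antipodeSq k H).toLinearMap : Module.End k H) ^ n) x =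
      (antipodeSq k H ^ n) x := by
    intro x
    rw [Module.End.pow_apply, AlgHom.coe_pow]
    rfl
  set P : H →ₐ[k] H := antipodeSq k H ^ n with hP
  -- the restriction of `P` to its range
  let e : P.range →ₐ[k] P.range := P.rangeRestrict.comp P.range.val
  have he : Function.Bijective e := by
    constructor
    · rw [injective_iff_map_eq_zero]
      rintro ⟨x, hx⟩ h0
      have h1 : P x = 0 := congrArg Subtype.val h0
      obtain ⟨y, hy⟩ := hx
      have := hn.disjoint.le_bot (x := x) ⟨by simpa [hpow] using h1, ⟨y, by rw [hpow]; exact hy⟩⟩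
      ext
      simpa using this
    · rintro ⟨_, ⟨y, rfl⟩⟩
      obtain ⟨a, ha, b, hb, hab⟩ := Submodule.mem_sup.1
        (hn.sup_eq_top.symm ▸ Submodule.mem_top : y ∈ _ ⊔ _)
      obtain ⟨c, rfl⟩ := hb
      rw [LinearMap.mem_ker, hpow] at ha
      rw [hpow] at hab
      refine ⟨⟨P c, c, rfl⟩, ?_⟩
      ext
      change P (P c) = P y
      rw [← hab, map_add, ha, zero_add]
  let E := AlgEquiv.ofBijective e he
  let π : H →ₐ[k] H := P.range.val.comp ((E.symm : P.range →ₐ[k] P.range).comp P.rangeRestrict)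
  have hπ : π = AlgHom.id k H := by
    apply algHom_eq_of_comp_antipodeSq_pow n
    intro x
    change ((E.symm (P.rangeRestrict (P x)) : P.range) : H) = P x
    have : P.rangeRestrict (P x) = E ⟨P x, x, rfl⟩ := rfl
    rw [this, AlgEquiv.symm_apply_apply]
  rw [injective_iff_map_eq_zero]
  intro x hx
  have hPx : P x = 0 := by
    obtain ⟨m, rfl⟩ := Nat.exists_eq_succ_of_ne_zero h0
    rw [hP, pow_succ, AlgHom.mul_apply]
    have h1 : antipodeSq k H x = 0 := by simp [antipodeSq, hx]
    rw [h1, map_zero]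
  have : π x = 0 := by
    have h2 : P.rangeRestrict x = 0 := Subtype.ext hPx
    simp [π, h2]
  rwa [hπ] at this

open HopfAlgebra TensorProduct in
/-- The antipode of a finitely generated projective Hopf algebra over a commutative ring
is bijective. -/
theorem antipode_bijective (k H : Type*) [CommRing k] [Ring H] [HopfAlgebra k H]
    [Module.Finite k H] [Module.Projective k H] :
    Function.Bijective (HopfAlgebra.antipode (R := k) (A := H)) := by
  have hs : Function.Surjective (HopfAlgebra.antipode (R := k) (A := H)) := by
    by_contra hns
    let Q := H ⧸ LinearMap.range (antipode k (A := H))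
    have hann : Module.annihilator k Q ≠ ⊤ := by
      intro h
      apply hns
      rw [← LinearMap.range_eq_top, eq_top_iff]
      intro x _
      have h1 : (1 : k) ∈ Module.annihilator k Q := h ▸ Submodule.mem_top
      have := Module.mem_annihilator.1 h1 (Submodule.Quotient.mk x)
      rw [one_smul] at this
      exact (Submodule.Quotient.mk_eq_zero _).1 this
    obtain ⟨m, hm, hle⟩ := Ideal.exists_le_maximal _ hann
    have hb : Function.Surjective (antipode (k ⧸ m) (A := (k ⧸ m) ⊗[k] H)) := by
      have : IsArtinianRing (k ⧸ m) := by
        letI := Ideal.Quotient.field m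
        infer_instance
      exact IsArtinian.surjective_of_injective_endomorphism _
        (antipode_injective_of_artinian _ _)
    have htop : (⊤ : Submodule k Q) ≤ m • ⊤ := by
      intro q _
      obtain ⟨x, rfl⟩ := Submodule.Quotient.mk_surjective _ q
      obtain ⟨t, ht⟩ := hb (1 ⊗ₜ x)
      have key : ∀ t : (k ⧸ m) ⊗[k] H,
          LinearMap.lTensor (k ⧸ m) (LinearMap.range (antipode k (A := H))).mkQ
            (antipode (k ⧸ m) t) = 0 := by
        intro t
        induction t with
        | zero => simp
        | add a b ha hb => rw [map_add, map_add, ha, hb, add_zero]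
        | tmul a b =>
          simp only [TensorProduct.antipode_def, AlgebraTensorModule.map_tmul,
            LinearMap.lTensor_tmul]
          rw [Submodule.mkQ_apply, (Submodule.Quotient.mk_eq_zero _).2 (LinearMap.mem_range_self _ b), tmul_zero]
      have h1 := key t
      rw [ht, LinearMap.lTensor_tmul] at h1
      have h2 := congrArg (TensorProduct.quotTensorEquivQuotSMul Q m) h1
      rw [map_zero] at h2
      have h3 : TensorProduct.quotTensorEquivQuotSMul Q m
        ((1 : k ⧸ m) ⊗ₜ[k] (Submodule.Quotient.mk x : Q)) =
          Submodule.Quotient.mk (Submodule.Quotient.mk x : Q) := by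
        have := TensorProduct.quotTensorEquivQuotSMul_mk_tmul m (1 : k)
          (Submodule.Quotient.mk x : Q)
        simpa using this
      exact (Submodule.Quotient.mk_eq_zero _).1 (h3.symm.trans h2)
    obtain ⟨r, hr1, hr2⟩ := Submodule.exists_sub_one_mem_and_smul_eq_zero_of_fg_of_le_smul m
      (⊤ : Submodule k Q) Module.Finite.fg_top htop
    have hr : r ∈ m := hle (Module.mem_annihilator.2 fun q => hr2 q Submodule.mem_top)
    apply hm.ne_top
    rw [Ideal.eq_top_iff_one]
    have := m.sub_mem hr hr1
    simpa using this
  exact ⟨OrzechProperty.injective_of_surjective_endomorphism _ hs, hs⟩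
end

section
/- Let H be a finitely generated projective Hopf k-algebra and set P := (∫ℓ_{H*})*, the k-dual of the module of left integrals in H*. Then H is a P-Frobenius algebra, with Frobenius homomorphism ψ : H → P satisfying Σ a₍₁₎ ⊗ ψ(a₍₂₎) = 1 ⊗ ψ(a) in H ⊗ P for all a ∈ H. -/
open scoped TensorProduct

/-- The Frobenius homomorphism `ψ : H → P = J*` (for `J ⊆ H*` the module of left
integrals), given by `ψ(a)(q) = q(a)`. -/
noncomputable def psiH (k H : Type*) [CommRing k] [Ring H] [HopfAlgebra k H]
    (J : Submodule k (Module.Dual k H)) : H →ₗ[k] Module.Dual k ↥J :=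
  (Submodule.subtype J).dualMap ∘ₗ Module.Dual.eval k H

section helpers
open TensorProduct Coalgebra HopfAlgebra WithConv

section conv
variable {k H : Type*} [CommRing k] [Ring H] [HopfAlgebra k H]

/-- `Σ (1 ⊗ h₁) Δ(S h₂) = S h ⊗ 1`. -/
lemma hopf_id2 (h : H) :
    LinearMap.mul' k (H ⊗[k] H) (TensorProduct.map
      ((TensorProduct.mk k H H 1)) (comul ∘ₗ antipode k) (comul (R := k) h))
      = antipode k h ⊗ₜ 1 := by
  have h1 : toConv (TensorProduct.mk k H H 1) =
      toConv ((TensorProduct.mk k H H).flip 1 ∘ₗ antipode k) * toConv (comul (R := k)) := by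
    apply WithConv.ext
    rw [LinearMap.convMul_def]
    simp only [ofConv_toConv]
    have e : LinearMap.mul' k (H ⊗[k] H) ∘ₗ
        TensorProduct.map ((TensorProduct.mk k H H).flip 1 ∘ₗ antipode k) (comul (R := k)) =
        LinearMap.rTensor H (LinearMap.mul' k H ∘ₗ (antipode k).rTensor H) ∘ₗ
          (TensorProduct.assoc k H H H).symm.toLinearMap ∘ₗ LinearMap.lTensor H (comul (R := k)) := by
      apply TensorProduct.ext'
      intro x y
      simp only [LinearMap.comp_apply, TensorProduct.map_tmul, LinearMap.lTensor_tmul]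
      induction comul (R := k) y with
      | zero => simp
      | tmul a b => simp
      | add a b ha hb => simp_all [tmul_add, mul_add]
    rw [← LinearMap.comp_assoc, e]
    ext x
    simp only [LinearMap.comp_apply, LinearEquiv.coe_coe, coassoc_symm_apply]
    rw [← LinearMap.rTensor_comp_apply, LinearMap.comp_assoc, mul_antipode_rTensor_comul,
      LinearMap.rTensor_comp_apply, rTensor_counit_comul]
    simp
  have h2 : toConv (TensorProduct.mk k H H 1) * toConv (comul ∘ₗ antipode k) =
     toConv ((TensorProduct.mk k H H).flip 1 ∘ₗ antipode k) := by
    rw [h1, mul_assoc, LinearMap.comul_right_inv, mul_one]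
  have := congr(ofConv $h2 h)
  rw [LinearMap.convMul_def] at this
  simpa using this

/-- `Σ Δ(S h₁) (h₂ ⊗ 1) = 1 ⊗ S h`. -/
lemma hopf_id1 (h : H) :
    LinearMap.mul' k (H ⊗[k] H) (TensorProduct.map
      (comul ∘ₗ antipode k) ((TensorProduct.mk k H H).flip 1) (comul (R := k) h))
      = 1 ⊗ₜ antipode k h := by
  have h1 : toConv ((TensorProduct.mk k H H).flip 1) =
      toConv (comul (R := k)) * toConv (TensorProduct.mk k H H 1 ∘ₗ antipode k) := by
    apply WithConv.ext
    rw [LinearMap.convMul_def]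
    simp only [ofConv_toConv]
    have e : LinearMap.mul' k (H ⊗[k] H) ∘ₗ
        TensorProduct.map (comul (R := k)) (TensorProduct.mk k H H 1 ∘ₗ antipode k) =
        LinearMap.lTensor H (LinearMap.mul' k H ∘ₗ (antipode k).lTensor H) ∘ₗ
          (TensorProduct.assoc k H H H).toLinearMap ∘ₗ LinearMap.rTensor H (comul (R := k)) := by
      apply TensorProduct.ext'
      intro x y
      simp only [LinearMap.comp_apply, TensorProduct.map_tmul, LinearMap.rTensor_tmul]
      induction comul (R := k) x with
      | zero => simp
      | tmul a b => simp
      | add a b ha hb => simp_all [add_tmul, add_mul]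
    rw [← LinearMap.comp_assoc, e]
    ext x
    simp only [LinearMap.comp_apply, LinearEquiv.coe_coe, coassoc_apply]
    rw [← LinearMap.lTensor_comp_apply, LinearMap.comp_assoc, mul_antipode_lTensor_comul,
      LinearMap.lTensor_comp_apply, lTensor_counit_comul]
    simp
  have h3 : toConv (comul ∘ₗ antipode k) * toConv (comul (R := k) (A := H)) = 1 := by
    apply WithConv.ext
    rw [LinearMap.convMul_def, LinearMap.convOne_def]
    simp only [ofConv_toConv]
    have e : LinearMap.mul' k (H ⊗[k] H) ∘ₗ
        TensorProduct.map (comul ∘ₗ antipode k) (comul (R := k)) =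
        comul ∘ₗ LinearMap.mul' k H ∘ₗ (antipode k).rTensor H := by
      apply TensorProduct.ext'
      intro x y
      simp
    rw [← LinearMap.comp_assoc, e, LinearMap.comp_assoc, LinearMap.comp_assoc,
      mul_antipode_rTensor_comul]
    ext x
    simp
  have h2 : toConv (comul ∘ₗ antipode k) * toConv ((TensorProduct.mk k H H).flip 1) =
     toConv (TensorProduct.mk k H H 1 ∘ₗ antipode k) := by
    rw [h1, ← mul_assoc, h3, one_mul]
  have := congr(ofConv $h2 h)
  rw [LinearMap.convMul_def] at this
  simpa using this

end conv

section hopfModule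
variable {k H M : Type*} [CommRing k] [Ring H] [HopfAlgebra k H] [AddCommGroup M] [Module k M]

/-- A right Hopf module. -/
structure IsHopfMod (ρ : M →ₗ[k] M ⊗[k] H) (act : M →ₗ[k] H →ₗ[k] M) : Prop where
  assoc : ∀ m h h', act (act m h) h' = act m (h * h')
  one : ∀ m, act m 1 = m
  coassoc : ∀ m, TensorProduct.assoc k M H H (LinearMap.rTensor H ρ (ρ m))
    = LinearMap.lTensor M (comul (R := k)) (ρ m)
  counit_act : ∀ m, TensorProduct.rid k M (LinearMap.lTensor M (counit (R := k)) (ρ m)) = m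
  compat : ∀ m h, ρ (act m h) = TensorProduct.map (TensorProduct.lift act) (LinearMap.mul' k H)
    (TensorProduct.tensorTensorTensorComm k M H H H (ρ m ⊗ₜ comul (R := k) h))

variable {ρ : M →ₗ[k] M ⊗[k] H} {act : M →ₗ[k] H →ₗ[k] M}

/-- the projection to coinvariants -/
noncomputable def hmProj (ρ : M →ₗ[k] M ⊗[k] H) (act : M →ₗ[k] H →ₗ[k] M) : M →ₗ[k] M :=
  TensorProduct.lift act ∘ₗ LinearMap.lTensor M (antipode k) ∘ₗ ρ

lemma compat_aux (x : M) (y : H) (t : H ⊗[k] H) :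
    TensorProduct.map (TensorProduct.lift act) (LinearMap.mul' k H)
    (TensorProduct.tensorTensorTensorComm k M H H H ((x ⊗ₜ y) ⊗ₜ t)) =
    LinearMap.rTensor H (act x) ((1 ⊗ₜ y) * t) := by
  induction t with
  | zero => simp
  | tmul a b => simp
  | add a b ha hb => simp_all [tmul_add, mul_add]

lemma IsHopfMod.proj_coinv (hm : IsHopfMod ρ act) (m : M) :
    ρ (hmProj ρ act m) = hmProj ρ act m ⊗ₜ 1 := by
  let C : M ⊗[k] (H ⊗[k] H) →ₗ[k] M ⊗[k] H :=
    TensorProduct.map (TensorProduct.lift act) (LinearMap.mul' k H) ∘ₗ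
    (TensorProduct.tensorTensorTensorComm k M H H H).toLinearMap ∘ₗ
    (LinearMap.lTensor (M ⊗[k] H) (comul ∘ₗ antipode k)) ∘ₗ
    (TensorProduct.assoc k M H H).symm.toLinearMap
  have e1 : ρ ∘ₗ TensorProduct.lift act ∘ₗ LinearMap.lTensor M (antipode k) =
      C ∘ₗ (TensorProduct.assoc k M H H).toLinearMap ∘ₗ LinearMap.rTensor H ρ := by
    apply TensorProduct.ext'
    intro x h
    simp [C, hm.compat]
  have e2 : C ∘ₗ LinearMap.lTensor M (comul (R := k)) =
      (TensorProduct.mk k M H).flip 1 ∘ₗ TensorProduct.lift act ∘ₗ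
        LinearMap.lTensor M (antipode k) := by
    apply TensorProduct.ext'
    intro x h
    have : C ∘ₗ TensorProduct.mk k M (H ⊗[k] H) x = LinearMap.rTensor H (act x) ∘ₗ
      LinearMap.mul' k (H ⊗[k] H) ∘ₗ (TensorProduct.map
      ((TensorProduct.mk k H H 1)) (comul ∘ₗ antipode k)) := by
      apply TensorProduct.ext'
      intro y z
      simp [C, compat_aux]
    have := congr($this (comul (R := k) h))
    simp only [LinearMap.comp_apply, hopf_id2] at this
    simpa using this
  have := congr($e1 (ρ m))
  simp only [LinearMap.comp_apply, LinearEquiv.coe_coe, hm.coassoc] at this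
  have h2 := congr($e2 (ρ m))
  simp only [LinearMap.comp_apply] at h2
  rw [h2] at this
  exact this

lemma IsHopfMod.act_coinv (hm : IsHopfMod ρ act) (f : M) (hf : ρ f = f ⊗ₜ 1) (h : H) :
    ρ (act f h) = LinearMap.rTensor H (act f) (comul (R := k) h) := by
  rw [hm.compat, hf, compat_aux, ← Algebra.TensorProduct.one_def, one_mul]

lemma IsHopfMod.proj_act (hm : IsHopfMod ρ act) (f : M) (hf : ρ f = f ⊗ₜ 1) (h : H) :
    hmProj ρ act (act f h) = counit (R := k) h • f := by
  simp only [hmProj, LinearMap.comp_apply, hm.act_coinv f hf]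
  have e : TensorProduct.lift act ∘ₗ LinearMap.lTensor M (antipode k) ∘ₗ
      LinearMap.rTensor H (act f) = act f ∘ₗ LinearMap.mul' k H ∘ₗ (antipode k).lTensor H := by
    apply TensorProduct.ext'
    intro x y
    simp [hm.assoc]
  have := congr($e (comul (R := k) h))
  simp only [LinearMap.comp_apply, mul_antipode_lTensor_comul_apply] at this
  rw [this, Algebra.algebraMap_eq_smul_one, map_smul, hm.one]

/-- The structure map `J ⊗ H → M`. -/
noncomputable def hmStr (act : M →ₗ[k] H →ₗ[k] M) (J : Submodule k M) : J ⊗[k] H →ₗ[k] M :=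
  TensorProduct.lift (act ∘ₗ J.subtype)

/-- Fundamental theorem of Hopf modules. -/
theorem IsHopfMod.bijective (hm : IsHopfMod ρ act) (J : Submodule k M)
    (hJ : ∀ f, f ∈ J ↔ ρ f = f ⊗ₜ 1) : Function.Bijective (hmStr act J) := by
  let P : M →ₗ[k] J := (hmProj ρ act).codRestrict J
    (fun m => (hJ _).2 (hm.proj_coinv m))
  let β : M →ₗ[k] J ⊗[k] H := LinearMap.rTensor H P ∘ₗ ρ
  have l : β ∘ₗ hmStr act J = LinearMap.id := by
    apply TensorProduct.ext'
    intro f h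
    have hf := (hJ _).1 f.2
    simp only [β, hmStr, LinearMap.comp_apply, TensorProduct.lift.tmul, Submodule.subtype_apply,
      hm.act_coinv _ hf, LinearMap.id_apply]
    rw [← LinearMap.rTensor_comp_apply]
    have : P ∘ₗ act f = LinearMap.toSpanSingleton k J f ∘ₗ counit (R := k) := by
      ext h
      simp [P, hm.proj_act _ hf]
    rw [this, LinearMap.rTensor_comp_apply, rTensor_counit_comul]
    simp
  have r : hmStr act J ∘ₗ β = LinearMap.id := by
    ext m
    let G : M ⊗[k] (H ⊗[k] H) →ₗ[k] M := TensorProduct.lift act ∘ₗ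
      LinearMap.lTensor M (LinearMap.mul' k H ∘ₗ (antipode k).rTensor H)
    have e1 : hmStr act J ∘ₗ LinearMap.rTensor H P =
        G ∘ₗ (TensorProduct.assoc k M H H).toLinearMap ∘ₗ LinearMap.rTensor H ρ := by
      apply TensorProduct.ext'
      intro x h
      simp only [hmStr, P, G, hmProj, LinearMap.comp_apply, LinearMap.rTensor_tmul,
        TensorProduct.lift.tmul, Submodule.subtype_apply, LinearMap.codRestrict_apply]
      induction ρ x with
      | zero => simp
      | tmul a b => simp [hm.assoc]
      | add a b ha hb => simp_all [add_tmul]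
    have := congr($e1 (ρ m))
    simp only [LinearMap.comp_apply, LinearEquiv.coe_coe, hm.coassoc] at this
    simp only [β, LinearMap.comp_apply, LinearMap.id_apply]
    rw [this]
    simp only [G, LinearMap.comp_apply]
    rw [← LinearMap.lTensor_comp_apply, LinearMap.comp_assoc, mul_antipode_rTensor_comul]
    conv_rhs => rw [← hm.counit_act m]
    induction ρ m with
    | zero => simp
    | tmul a b => simp [Algebra.algebraMap_eq_smul_one, hm.one]
    | add a b ha hb => simp_all
  exact ⟨(Function.LeftInverse.injective (g := β) (fun x => congr($l x))),
    Function.RightInverse.surjective (g := β) (fun x => congr($r x))⟩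

end hopfModule

section dual
variable (k H : Type*) [CommRing k] [Ring H] [HopfAlgebra k H]

/-- `W g a = Σ a₁ g(a₂)` -/
noncomputable def dW : Module.Dual k H →ₗ[k] H →ₗ[k] H where
  toFun g := (TensorProduct.rid k H).toLinearMap ∘ₗ LinearMap.lTensor H g ∘ₗ comul
  map_add' f g := by ext; simp [LinearMap.lTensor_add]
  map_smul' c g := by ext; simp [LinearMap.lTensor_smul]

lemma dW_apply (g : Module.Dual k H) (a : H) :
    dW k H g a = TensorProduct.rid k H (LinearMap.lTensor H g (comul (R := k) a)) := rfl

/-- `act g h = g(· S(h))` -/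
noncomputable def dAct : Module.Dual k H →ₗ[k] H →ₗ[k] Module.Dual k H :=
  LinearMap.mk₂ k (fun g h => g ∘ₗ LinearMap.mulRight k (antipode k h))
    (by intros; ext; simp) (by intros; ext; simp) (by intros; ext; simp [mul_add])
    (by intros; ext; simp)

@[simp] lemma dAct_apply (g : Module.Dual k H) (h a : H) :
    dAct k H g h a = g (a * antipode k h) := rfl

variable [Module.Finite k H] [Module.Projective k H]

/-- the coaction on the dual -/
noncomputable def dRho : Module.Dual k H →ₗ[k] Module.Dual k H ⊗[k] H :=
  (dualTensorHomEquiv k H H).symm.toLinearMap ∘ₗ dW k H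

lemma dualTensorHom_dRho (g : Module.Dual k H) :
    dualTensorHom k H H (dRho k H g) = dW k H g :=
  (dualTensorHomEquiv k H H).apply_symm_apply _

lemma dual_isHopfMod : IsHopfMod (dRho k H) (dAct k H) where
  assoc g h h' := by
    ext a
    simp [antipode_mul_antidistrib, mul_assoc]
  one g := by ext a; simp
  coassoc g := by
    apply (dualTensorHom_bijective (R := k) (M := H) (N := H ⊗[k] H)).1
    ext a
    have e1 : ∀ t : Module.Dual k H ⊗[k] H, dualTensorHom k H (H ⊗[k] H)
        (TensorProduct.assoc k _ H H (LinearMap.rTensor H (dRho k H) t)) a =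
        LinearMap.lTensor H (dualTensorHom k H H t) (comul (R := k) a) := by
      intro t
      induction t with
      | zero => simp
      | add x y hx hy => simp_all [LinearMap.lTensor_add]
      | tmul f h =>
        have e : ∀ s : Module.Dual k H ⊗[k] H, dualTensorHom k H (H ⊗[k] H)
            (TensorProduct.assoc k _ H H (s ⊗ₜ h)) a = (dualTensorHom k H H s a) ⊗ₜ h := by
          intro s
          induction s with
          | zero => simp
          | add x y hx hy => simp_all [add_tmul]
          | tmul f h' => simp [smul_tmul']
        rw [LinearMap.rTensor_tmul, e, dualTensorHom_dRho, dW_apply]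
        induction comul (R := k) a with
        | zero => simp
        | add x y hx hy => simp_all [add_tmul]
        | tmul x y => simp [smul_tmul]
    have e2 : ∀ t : Module.Dual k H ⊗[k] H, dualTensorHom k H (H ⊗[k] H)
        (LinearMap.lTensor _ (comul (R := k)) t) a = comul (R := k) (dualTensorHom k H H t a) := by
      intro t
      induction t with
      | zero => simp
      | add x y hx hy => simp_all
      | tmul f h => simp
    rw [e1, e2, dualTensorHom_dRho, dW_apply]
    have e3 : comul (R := k) ∘ₗ (TensorProduct.rid k H).toLinearMap ∘ₗ LinearMap.lTensor H g =
        LinearMap.lTensor H ((TensorProduct.rid k H).toLinearMap ∘ₗ LinearMap.lTensor H g) ∘ₗ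
        (TensorProduct.assoc k H H H).toLinearMap ∘ₗ LinearMap.rTensor H (comul (R := k)) := by
      apply TensorProduct.ext'
      intro x y
      simp only [LinearMap.comp_apply, LinearEquiv.coe_coe, LinearMap.rTensor_tmul,
        LinearMap.lTensor_tmul, TensorProduct.rid_tmul, map_smul]
      induction comul (R := k) x with
      | zero => simp
      | add x y hx hy => simp_all [add_tmul]
      | tmul x y => simp
    have := congr($e3 (comul (R := k) a))
    simp only [LinearMap.comp_apply, LinearEquiv.coe_coe, coassoc_apply] at this
    rw [this, ← LinearMap.lTensor_comp_apply]
    rfl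
  counit_act g := by
    ext a
    have e : ∀ t : Module.Dual k H ⊗[k] H,
      TensorProduct.rid k _ (LinearMap.lTensor _ (counit (R := k)) t) a =
        counit (R := k) (dualTensorHom k H H t a) := by
      intro t
      induction t with
      | zero => simp
      | add x y hx hy => simp_all
      | tmul f h => simp [mul_comm]
    rw [e, dualTensorHom_dRho, dW_apply]
    have e2 : ∀ t : H ⊗[k] H, counit (R := k) (TensorProduct.rid k H (LinearMap.lTensor H g t)) =
        g (TensorProduct.lid k H (LinearMap.rTensor H counit t)) := by
      intro t
      induction t with
      | zero => simp
      | add x y hx hy => simp_all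
      | tmul f h => simp [mul_comm]
    rw [e2, rTensor_counit_comul]
    simp
  compat g h := by
    apply (dualTensorHom_bijective (R := k) (M := H) (N := H)).1
    ext a
    rw [dualTensorHom_dRho]
    have e1 : ∀ (t : Module.Dual k H ⊗[k] H) (x y : H), dualTensorHom k H H
        (TensorProduct.map (TensorProduct.lift (dAct k H)) (LinearMap.mul' k H)
          (TensorProduct.tensorTensorTensorComm k _ H H H (t ⊗ₜ (x ⊗ₜ y)))) a =
        dualTensorHom k H H t (a * antipode k x) * y := by
      intro t x y
      induction t with
      | zero => simp
      | add x y hx hy => simp_all [add_tmul, add_mul]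
      | tmul f h => simp
    have e0 : ∀ (t : H ⊗[k] H) (y : H), TensorProduct.rid k H (LinearMap.lTensor H g t) * y =
        TensorProduct.rid k H (LinearMap.lTensor H g (t * (y ⊗ₜ 1))) := by
      intro t y
      induction t with
      | zero => simp
      | add x y hx hy => simp_all [add_mul]
      | tmul f h => simp
    have e2 : ∀ s : H ⊗[k] H, dualTensorHom k H H
        (TensorProduct.map (TensorProduct.lift (dAct k H)) (LinearMap.mul' k H)
          (TensorProduct.tensorTensorTensorComm k _ H H H (dRho k H g ⊗ₜ s))) a =
        TensorProduct.rid k H (LinearMap.lTensor H g (comul (R := k) a *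
          LinearMap.mul' k (H ⊗[k] H) (TensorProduct.map
            (comul ∘ₗ antipode k) ((TensorProduct.mk k H H).flip 1) s))) := by
      intro s
      induction s with
      | zero => simp
      | add x y hx hy => simp_all [tmul_add, mul_add]
      | tmul x y =>
        rw [e1, dualTensorHom_dRho, dW_apply, e0, Bialgebra.comul_mul]
        simp [mul_assoc]
    rw [e2, hopf_id1, dW_apply]
    induction comul (R := k) a with
    | zero => simp
    | add x y hx hy => simp_all [add_mul]
    | tmul x y => simp

lemma mem_integral_iff (f : Module.Dual k H) :
    (∀ g : Module.Dual k H, conv k H g f = g 1 • f) ↔ dRho k H f = f ⊗ₜ 1 := by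
  have e : ∀ g a, conv k H g f a = g (dW k H f a) := by
    intro g a
    simp only [conv, dW_apply, LinearMap.comp_apply]
    induction comul (R := k) a with
    | zero => simp
    | add x y hx hy => simp_all
    | tmul x y => simp [mul_comm]
  constructor
  · intro h
    apply (dualTensorHom_bijective (R := k) (M := H) (N := H)).1
    ext a
    rw [dualTensorHom_dRho]
    rw [← sub_eq_zero, ← Module.forall_dual_apply_eq_zero_iff k]
    intro g
    have := congr($(h g) a)
    rw [e] at this
    simp [this, mul_comm]
  · intro h g
    ext a
    rw [e, ← dualTensorHom_dRho, h]
    simp [mul_comm]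

theorem alpha_bijective (J : Submodule k (Module.Dual k H))
    (hJ : ↑J = {f : Module.Dual k H | ∀ g : Module.Dual k H, conv k H g f = g 1 • f}) :
    Function.Bijective (hmStr (dAct k H) J) := by
  apply (dual_isHopfMod k H).bijective
  intro f
  rw [← mem_integral_iff, ← SetLike.mem_coe, hJ]
  rfl

/-- the submodule of left integrals -/
def lInt (k H : Type*) [CommRing k] [AddCommGroup H] [One H] [Module k H] [Coalgebra k H] :
    Submodule k (Module.Dual k H) where
  carrier := {f : Module.Dual k H | ∀ g : Module.Dual k H, conv k H g f = g 1 • f}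
  add_mem' := by
    intro a b ha hb g
    have := ha g
    have := hb g
    simp_all [conv, TensorProduct.map_add_right, LinearMap.add_comp, LinearMap.comp_add]
  zero_mem' := by intro g; simp [conv]
  smul_mem' := by
    intro c a ha g
    have := ha g
    simp only [conv, TensorProduct.map_smul_right, LinearMap.smul_comp, LinearMap.comp_smul] at *
    rw [this, smul_comm]

theorem antipode_bijective_s13 : Function.Bijective (antipode k : H →ₗ[k] H) := by
  let α := LinearEquiv.ofBijective _ (alpha_bijective k H (lInt k H) rfl)
  have key : ∀ u, ∃ T : H →ₗ[k] H, ∀ h, T (antipode k h) = (α u) 1 • h := by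
    intro u
    induction u with
    | zero => exact ⟨0, by simp⟩
    | add x y hx hy =>
      obtain ⟨T, hT⟩ := hx
      obtain ⟨T', hT'⟩ := hy
      exact ⟨T + T', by simp [hT, hT', add_smul]⟩
    | tmul f h0 =>
      refine ⟨(TensorProduct.lid k H).toLinearMap ∘ₗ
        LinearMap.rTensor H (Module.Dual.eval k H (antipode k h0) ∘ₗ (lInt k H).subtype) ∘ₗ
        α.symm.toLinearMap ∘ₗ
        (LinearMap.compRight k f.1 : (H →ₗ[k] H) →ₗ[k] _) ∘ₗ (LinearMap.mul k H).flip, ?_⟩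
      intro h
      have : α (f ⊗ₜ h) = f.1 ∘ₗ (LinearMap.mul k H).flip (antipode k h) := rfl
      have h2 : α (f ⊗ₜ h0) 1 = f.1 (antipode k h0) := by
        simp [α, hmStr]
      rw [h2]
      simp only [LinearMap.comp_apply, LinearMap.compRight_apply, ← this, LinearEquiv.coe_coe,
        LinearEquiv.symm_apply_apply]
      simp
  obtain ⟨T, hT⟩ := key (α.symm counit)
  have hT' : Function.LeftInverse T (antipode k : H →ₗ[k] H) := by
    intro h
    rw [hT]
    simp
  have hb := OrzechProperty.bijective_of_surjective_endomorphism T hT'.surjective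
  refine ⟨hT'.injective, fun y => ⟨T y, hb.1 (hT' _)⟩⟩

end dual

section final
variable (k H : Type*) [CommRing k] [Ring H] [HopfAlgebra k H]

/-- the opposite bialgebra -/
noncomputable instance opBialg : Bialgebra k Hᵐᵒᵖ :=
  Bialgebra.mk' k Hᵐᵒᵖ
    (by simp [MulOpposite.counit_def])
    (by intro a b; simp [MulOpposite.counit_def, mul_comm])
    (by simp [MulOpposite.comul_def, Algebra.TensorProduct.one_def])
    (by
      intro a b
      simp only [MulOpposite.comul_def, LinearMap.comp_apply, LinearEquiv.coe_coe,
        MulOpposite.coe_opLinearEquiv_symm, MulOpposite.unop_mul, Bialgebra.comul_mul]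
      generalize comul (R := k) (MulOpposite.unop b) = s
      generalize comul (R := k) (MulOpposite.unop a) = t
      induction s with
      | zero => simp
      | add x y hx hy => simp_all [add_mul, mul_add]
      | tmul x y =>
        induction t with
        | zero => simp
        | add x y hx hy => simp_all [add_mul, mul_add]
        | tmul x' y' => simp)

variable [Module.Finite k H] [Module.Projective k H]

/-- the antipode as a linear equivalence -/
noncomputable def sEquiv : H ≃ₗ[k] H := LinearEquiv.ofBijective _ (antipode_bijective_s13 k H)

lemma antipode_sEquiv_symm (h : H) : antipode k ((sEquiv k H).symm h) = h :=
  (sEquiv k H).apply_symm_apply h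

/-- the opposite Hopf algebra -/
noncomputable abbrev opHopf : HopfAlgebra k Hᵐᵒᵖ :=
  { opBialg k H with
    antipode := (MulOpposite.opLinearEquiv k).toLinearMap ∘ₗ (sEquiv k H).symm.toLinearMap ∘ₗ
      (MulOpposite.opLinearEquiv k).symm.toLinearMap
    mul_antipode_rTensor_comul := by
      ext a
      induction a using MulOpposite.rec' with | _ a
      apply MulOpposite.unop_injective
      apply (antipode_bijective_s13 k H).1
      have e : ∀ t : H ⊗[k] H, antipode k (MulOpposite.unop (LinearMap.mul' k Hᵐᵒᵖ
        (LinearMap.rTensor Hᵐᵒᵖ ((MulOpposite.opLinearEquiv k).toLinearMap ∘ₗ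
          (sEquiv k H).symm.toLinearMap ∘ₗ (MulOpposite.opLinearEquiv k).symm.toLinearMap)
          (TensorProduct.map (MulOpposite.opLinearEquiv k).toLinearMap
            (MulOpposite.opLinearEquiv k).toLinearMap t)))) =
          LinearMap.mul' k H ((antipode k).lTensor H t) := by
        intro t
        induction t with
        | zero => simp
        | add x y hx hy => simp_all
        | tmul x y => simp [antipode_mul_antidistrib, antipode_sEquiv_symm]
      refine (e (comul (R := k) a)).trans ?_
      rw [mul_antipode_lTensor_comul_apply]
      simp [Algebra.algebraMap_eq_smul_one, MulOpposite.counit_def]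
    mul_antipode_lTensor_comul := by
      ext a
      induction a using MulOpposite.rec' with | _ a
      apply MulOpposite.unop_injective
      apply (antipode_bijective_s13 k H).1
      have e : ∀ t : H ⊗[k] H, antipode k (MulOpposite.unop (LinearMap.mul' k Hᵐᵒᵖ
        (LinearMap.lTensor Hᵐᵒᵖ ((MulOpposite.opLinearEquiv k).toLinearMap ∘ₗ
          (sEquiv k H).symm.toLinearMap ∘ₗ (MulOpposite.opLinearEquiv k).symm.toLinearMap)
          (TensorProduct.map (MulOpposite.opLinearEquiv k).toLinearMap
            (MulOpposite.opLinearEquiv k).toLinearMap t)))) =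
          LinearMap.mul' k H ((antipode k).rTensor H t) := by
        intro t
        induction t with
        | zero => simp
        | add x y hx hy => simp_all
        | tmul x y => simp [antipode_mul_antidistrib, antipode_sEquiv_symm]
      refine (e (comul (R := k) a)).trans ?_
      rw [mul_antipode_rTensor_comul_apply]
      simp [Algebra.algebraMap_eq_smul_one, MulOpposite.counit_def] }

/-- `Φ(f ⊗ x)(a) = f (x a)` -/
noncomputable def phiL (J : Submodule k (Module.Dual k H)) : J ⊗[k] H →ₗ[k] Module.Dual k H :=
  TensorProduct.lift (LinearMap.mk₂ k (fun (f : J) x => f.1 ∘ₗ LinearMap.mulLeft k x)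
    (by intros; ext; simp) (by intros; ext; simp) (by intros; ext; simp [add_mul])
    (by intros; ext; simp))

lemma conv_op (g f : Module.Dual k H) (a : H) :
    conv k Hᵐᵒᵖ (g ∘ₗ (MulOpposite.opLinearEquiv k).symm.toLinearMap)
      (f ∘ₗ (MulOpposite.opLinearEquiv k).symm.toLinearMap) (MulOpposite.op a) =
    conv k H g f a := by
  simp only [conv, MulOpposite.comul_def, LinearMap.comp_apply, LinearEquiv.coe_coe]
  change _ = LinearMap.mul' k k (TensorProduct.map g f (comul (R := k) a))
  simp only [MulOpposite.coe_opLinearEquiv_symm, MulOpposite.unop_op]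
  induction comul (R := k) a with
  | zero => simp
  | add x y hx hy => simp_all
  | tmul x y => simp

theorem phiL_bijective (J : Submodule k (Module.Dual k H))
    (hJ : ↑J = {f : Module.Dual k H | ∀ g : Module.Dual k H, conv k H g f = g 1 • f}) :
    Function.Bijective (phiL k H J) := by
  letI := opHopf k H
  let o : H ≃ₗ[k] Hᵐᵒᵖ := MulOpposite.opLinearEquiv k
  let D : Module.Dual k H ≃ₗ[k] Module.Dual k Hᵐᵒᵖ := o.symm.dualMap
  let J' : Submodule k (Module.Dual k Hᵐᵒᵖ) := J.map D.toLinearMap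
  have hJ' : ↑J' = {f : Module.Dual k Hᵐᵒᵖ | ∀ g : Module.Dual k Hᵐᵒᵖ,
      conv k Hᵐᵒᵖ g f = g 1 • f} := by
    have hm : ∀ f, f ∈ J ↔ ∀ g : Module.Dual k H, conv k H g f = g 1 • f := by
      intro f
      rw [← SetLike.mem_coe, hJ]
      rfl
    ext f
    obtain ⟨f, rfl⟩ := D.surjective f
    have : D f ∈ (J' : Set _) ↔ f ∈ J := by
      simp [J']
    rw [this, hm]
    constructor
    · intro h g
      obtain ⟨g, rfl⟩ := D.surjective g
      ext a
      induction a using MulOpposite.rec' with | _ a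
      refine (conv_op k H g f a).trans ?_
      rw [h]
      rfl
    · intro h g
      ext a
      refine (conv_op k H g f a).symm.trans ?_
      have := congr($(h (D g)) (MulOpposite.op a))
      exact this
  haveI : Module.Finite k Hᵐᵒᵖ := Module.Finite.equiv o
  haveI : Module.Projective k Hᵐᵒᵖ := Module.Projective.of_equiv o
  have hb := alpha_bijective k Hᵐᵒᵖ J' hJ'
  let E : J ⊗[k] H ≃ₗ[k] J' ⊗[k] Hᵐᵒᵖ :=
    TensorProduct.congr (D.submoduleMap J) ((sEquiv k H).trans o)
  have e : phiL k H J = D.symm.toLinearMap ∘ₗ hmStr (dAct k Hᵐᵒᵖ) J' ∘ₗ E.toLinearMap := by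
    apply TensorProduct.ext'
    intro f x
    ext a
    have h2 : MulOpposite.unop (antipode k (MulOpposite.op (sEquiv k H x))) = x := by
      change (sEquiv k H).symm (sEquiv k H x) = x
      simp
    have h1 : phiL k H J (f ⊗ₜ x) a = f.1 (x * a) := rfl
    have h3 : (D.symm.toLinearMap ∘ₗ hmStr (dAct k Hᵐᵒᵖ) J' ∘ₗ E.toLinearMap) (f ⊗ₜ x) a =
      f.1 (MulOpposite.unop (antipode k (MulOpposite.op (sEquiv k H x))) * a) := rfl
    rw [h1, h3, h2]
  rw [e]
  exact D.symm.bijective.comp (hb.comp E.bijective)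

theorem final1 (J : Submodule k (Module.Dual k H))
    (hJ : ↑J = {f : Module.Dual k H | ∀ g : Module.Dual k H, conv k H g f = g 1 • f}) :
    Function.Bijective (fun a : H => psiH k H J ∘ₗ LinearMap.mulRight k a) := by
  let Φ := LinearEquiv.ofBijective _ (phiL_bijective k H J hJ)
  let e : H ≃ₗ[k] (H →ₗ[k] Module.Dual k J) :=
    (Module.evalEquiv k H).trans <| Φ.dualMap.trans <|
      (TensorProduct.lift.equiv (RingHom.id k) J H k).symm.trans LinearMap.lflip
  have : (fun a : H => psiH k H J ∘ₗ LinearMap.mulRight k a) = e := by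
    funext a
    ext x f
    rfl
  rw [this]
  exact e.bijective

theorem final2 (J : Submodule k (Module.Dual k H))
    (hJ : ↑J = {f : Module.Dual k H | ∀ g : Module.Dual k H, conv k H g f = g 1 • f}) (a : H) :
    (LinearMap.lTensor H (psiH k H J)) (Coalgebra.comul (R := k) a)
      = 1 ⊗ₜ[k] psiH k H J a := by
  have sep : ∀ t : H ⊗[k] Module.Dual k J, (∀ g : Module.Dual k H,
      TensorProduct.lid k _ (LinearMap.rTensor _ g t) = 0) → t = 0 := by
    intro t ht
    obtain ⟨u, hu⟩ := (dualTensorHom_bijective (R := k) (M := H) (N := H)).2 LinearMap.id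
    have : ∀ u : Module.Dual k H ⊗[k] H,
        LinearMap.rTensor _ (dualTensorHom k H H u) t = 0 := by
      intro u
      induction u with
      | zero => simp
      | add x y hx hy => simp_all [LinearMap.rTensor_add]
      | tmul g h =>
        have h0 : LinearMap.rTensor (Module.Dual k J) g t = 0 := by
          simpa using ht g
        have : dualTensorHom k H H (g ⊗ₜ h) = LinearMap.toSpanSingleton k H h ∘ₗ g := by
          ext; simp
        rw [this, LinearMap.rTensor_comp_apply, h0, map_zero]
    simpa [hu] using this u
  rw [← sub_eq_zero]
  apply sep
  intro g
  ext f
  have hf : conv k H g f.1 = g 1 • f.1 := by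
    have : f.1 ∈ (J : Set _) := f.2
    rw [hJ] at this
    exact this g
  have hf := congr($hf a)
  have e : ∀ t : H ⊗[k] H, TensorProduct.lid k _ (LinearMap.rTensor _ g
      (LinearMap.lTensor H (psiH k H J) t)) f = LinearMap.mul' k k (TensorProduct.map g f.1 t) := by
    intro t
    induction t with
    | zero => simp
    | add x y hx hy => simp_all
    | tmul x y => simp [psiH]
  rw [map_sub, map_sub, LinearMap.sub_apply, e]
  refine (congrArg (· - _) hf).trans ?_
  simp [psiH]

end final
end helpers

/-- A finitely generated projective Hopf `k`-algebra `H` is a `P`-Frobenius algebra for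
`P = (∫ℓ_{H*})*`: the map `a ↦ ψ(—·a)` is an isomorphism `H ≅ Hom_k(H,P)`, where
`ψ(a)(q) = q(a)`; moreover `ψ` satisfies `Σ a₍₁₎ ⊗ ψ(a₍₂₎) = 1 ⊗ ψ(a)` in `H ⊗ P`. -/
theorem hopf_is_pFrobenius (k H : Type*) [CommRing k] [Ring H] [HopfAlgebra k H]
    [Module.Finite k H] [Module.Projective k H]
    (J : Submodule k (Module.Dual k H))
    (hJ : ↑J = {f : Module.Dual k H | ∀ g : Module.Dual k H, conv k H g f = g 1 • f}) :
    Function.Bijective (fun a : H => psiH k H J ∘ₗ LinearMap.mulRight k a) ∧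
    ∀ a : H, (LinearMap.lTensor H (psiH k H J)) (Coalgebra.comul (R := k) a)
      = 1 ⊗ₜ[k] psiH k H J a := by
  exact ⟨final1 k H J hJ, final2 k H J hJ⟩
end

section
/- If H is a Hopf algebra over a commutative ring k that is finitely generated projective over k and is a Frobenius k-algebra, then H is an FH-algebra, i.e., the space of left integrals in H* is free of rank 1 and H admits a left integral in H* as Frobenius homomorphism. -/
open scoped TensorProduct

open Coalgebra HopfAlgebra

section helpers

variable {k H : Type*} [CommRing k] [Ring H] [HopfAlgebra k H]

/-- `x ⊗ m ↦ f m • x`. -/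
noncomputable def slR {M : Type*} [AddCommGroup M] [Module k M] (f : Module.Dual k M) :
    H ⊗[k] M →ₗ[k] H :=
  (TensorProduct.rid k H).toLinearMap ∘ₗ f.lTensor H

theorem slR_tmul {M : Type*} [AddCommGroup M] [Module k M] (f : Module.Dual k M) (x : H) (y : M) :
    slR f (x ⊗ₜ[k] y) = f y • x := by
  simp [slR]

/-- `f ↦ t₁ f(t₂)`. -/
noncomputable def th (t : H) : Module.Dual k H →ₗ[k] H where
  toFun f := slR f (comul t)
  map_add' f g := by simp [slR, LinearMap.lTensor_add]
  map_smul' c f := by simp [slR, LinearMap.lTensor_smul]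

theorem th_apply (t : H) (f : Module.Dual k H) : th t f = slR f (comul t) := rfl

theorem slR_mul_left (f : Module.Dual k H) (X : H ⊗[k] H) (a : H) :
    slR f (X * (a ⊗ₜ[k] 1)) = slR f X * a := by
  induction X with
  | zero => simp
  | add x y hx hy => simp [add_mul, hx, hy]
  | tmul x y => simp [slR_tmul]

theorem slR_mul_right (f : Module.Dual k H) (X : H ⊗[k] H) (b : H) :
    slR f (X * (1 ⊗ₜ[k] b)) = slR (f ∘ₗ LinearMap.mulRight k b) X := by
  induction X with
  | zero => simp
  | add x y hx hy => simp [add_mul, hx, hy]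
  | tmul x y => simp [slR_tmul]

theorem apply_slR (g f : Module.Dual k H) (X : H ⊗[k] H) :
    g (slR f X) = LinearMap.mul' k k (TensorProduct.map g f X) := by
  induction X with
  | zero => simp
  | add x y hx hy => simp [hx, hy]
  | tmul x y => simp [slR_tmul, mul_comm]

theorem apply_th (g f : Module.Dual k H) (t : H) : g (th t f) = conv k H g f t :=
  apply_slR g f _

theorem conv_assoc (h g f : Module.Dual k H) :
    conv k H h (conv k H g f) = conv k H (conv k H h g) f := by
  ext a
  have key : ∀ X : H ⊗[k] (H ⊗[k] H),
      LinearMap.mul' k k (TensorProduct.map h (LinearMap.mul' k k ∘ₗ TensorProduct.map g f) X) =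
      LinearMap.mul' k k (TensorProduct.map (LinearMap.mul' k k ∘ₗ TensorProduct.map h g) f
        ((TensorProduct.assoc k H H H).symm X)) := by
    intro X
    rw [← LinearMap.comp_apply, ← LinearMap.comp_apply]
    rw [← LinearEquiv.coe_coe, ← LinearMap.comp_apply]
    congr 1
    ext x y z
    simp [mul_assoc]
  have := key (comul.lTensor H (comul a))
  rw [coassoc_symm_apply] at this
  have e1 : ∀ X : H ⊗[k] H, TensorProduct.map h (conv k H g f) X =
      TensorProduct.map h (LinearMap.mul' k k ∘ₗ TensorProduct.map g f) (comul.lTensor H X) := by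
    intro X
    induction X with
    | zero => simp
    | add x y hx hy => simp only [map_add, hx, hy]
    | tmul x y => simp [conv]
  have e2 : ∀ X : H ⊗[k] H, TensorProduct.map (conv k H h g) f X =
      TensorProduct.map (LinearMap.mul' k k ∘ₗ TensorProduct.map h g) f (comul.rTensor H X) := by
    intro X
    induction X with
    | zero => simp
    | add x y hx hy => simp only [map_add, hx, hy]
    | tmul x y => simp [conv]
  rw [conv, conv.eq_def k H (conv k H h g)]
  simp only [LinearMap.comp_apply]
  rw [e1, e2, this]

/-- `Σ Δ(a₁)(1 ⊗ S a₂) = a ⊗ 1`. -/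
theorem comul_antipode (a : H) :
    ∑ i ∈ (ℛ k a).index, (comul ((ℛ k a).left i) : H ⊗[k] H) *
      (1 ⊗ₜ[k] antipode k ((ℛ k a).right i)) = a ⊗ₜ[k] 1 := by
  let T : H ⊗[k] (H ⊗[k] H) →ₗ[k] H ⊗[k] H :=
    (LinearMap.mul' k H ∘ₗ (antipode k).lTensor H).lTensor H
  have h1 : ∀ (X : H ⊗[k] H) (b : H),
      X * (1 ⊗ₜ[k] antipode k b) = T (TensorProduct.assoc k H H H (X ⊗ₜ[k] b)) := by
    intro X b
    induction X with
    | zero => simp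
    | add x y hx hy => simp only [add_mul, hx, hy, TensorProduct.add_tmul, map_add]
    | tmul x y => simp [T]
  have h2 : ∀ X : H ⊗[k] H, T (comul.lTensor H X) =
      ((Algebra.linearMap k H).lTensor H) (counit.lTensor H X) := by
    intro X
    induction X with
    | zero => simp
    | add x y hx hy => simp only [map_add, hx, hy]
    | tmul x y => simp [T]
  calc _ = T (TensorProduct.assoc k H H H (comul.rTensor H (comul a))) := by
        simp_rw [h1]
        conv_rhs => rw [← (ℛ k a).eq]
        simp only [map_sum, LinearMap.rTensor_tmul]
    _ = _ := by
        rw [coassoc_apply, h2, lTensor_counit_comul]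
        simp

theorem shift (t : H) (ht : ∀ a, t * a = counit (R := k) a • t) (a : H) :
    (comul t : H ⊗[k] H) * (a ⊗ₜ[k] 1) = comul t * (1 ⊗ₜ[k] antipode k a) := by
  rw [← comul_antipode a, Finset.mul_sum]
  simp_rw [← mul_assoc, ← Bialgebra.comul_mul, ht, map_smul, smul_mul_assoc, ← mul_smul_comm,
    ← TensorProduct.tmul_smul, ← map_smul]
  rw [← Finset.mul_sum, ← TensorProduct.tmul_sum, ← map_sum, sum_counit_smul]

theorem th_mul (t : H) (ht : ∀ a, t * a = counit (R := k) a • t) (f : Module.Dual k H) (a : H) :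
    th t (f ∘ₗ LinearMap.mulRight k (antipode k a)) = th t f * a := by
  rw [th_apply, th_apply, ← slR_mul_right, ← shift t ht, slR_mul_left]

theorem sum_th {n : ℕ} (e : Fin n → H) (d : Fin n → Module.Dual k H)
    (hed : ∀ x, ∑ i, d i x • e i = x) (ψ : Module.Dual k H) (t : H) :
    ∑ i, th t (conv k H (d i) ψ) * antipode k (e i) = ψ t • 1 := by
  let T : (H ⊗[k] H) ⊗[k] H →ₗ[k] H :=
    (TensorProduct.rid k H).toLinearMap ∘ₗ
      TensorProduct.map (LinearMap.mul' k H ∘ₗ (antipode k).lTensor H) ψ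
  have h1 : ∀ X : H ⊗[k] (H ⊗[k] H),
      ∑ i, slR (LinearMap.mul' k k ∘ₗ TensorProduct.map (d i) ψ) X * antipode k (e i) =
      T ((TensorProduct.assoc k H H H).symm X) := by
    intro X
    induction X with
    | zero => simp
    | add x y hx hy => simp only [map_add, add_mul, Finset.sum_add_distrib, hx, hy]
    | tmul x Y =>
      induction Y with
      | zero => simp
      | add x y hx hy =>
        simp only [TensorProduct.tmul_add, map_add, add_mul, Finset.sum_add_distrib, hx, hy]
      | tmul y z =>
        simp only [slR_tmul, LinearMap.comp_apply, TensorProduct.map_tmul, LinearMap.mul'_apply,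
          TensorProduct.assoc_symm_tmul, T, LinearMap.lTensor_tmul, LinearEquiv.coe_coe,
          TensorProduct.rid_tmul]
        conv_rhs => rw [← hed y]
        rw [map_sum, Finset.mul_sum, Finset.smul_sum]
        refine Finset.sum_congr rfl fun i _ => ?_
        rw [map_smul, mul_smul_comm, smul_mul_assoc, smul_smul, mul_comm]
  have h2 : ∀ i, ∀ X : H ⊗[k] H, slR (conv k H (d i) ψ) X =
      slR (LinearMap.mul' k k ∘ₗ TensorProduct.map (d i) ψ) (comul.lTensor H X) := by
    intro i X
    induction X with
    | zero => simp
    | add x y hx hy => simp only [map_add, hx, hy]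
    | tmul x y => simp [slR_tmul, conv]
  have h3 : ∀ X : H ⊗[k] H, T (comul.rTensor H X) =
      (TensorProduct.lid k H (counit.rTensor H X) |> ψ) • 1 := by
    intro X
    induction X with
    | zero => simp
    | add x y hx hy => simp only [map_add, hx, hy, add_smul]
    | tmul x y =>
      simp [T, Algebra.algebraMap_eq_smul_one, smul_smul, mul_comm]
  simp_rw [th_apply, h2]
  rw [h1, coassoc_symm_apply, h3, rTensor_counit_comul]
  simp

theorem dual_sep [Module.Projective k H] {x y : H} (h : ∀ g : Module.Dual k H, g x = g y) :
    x = y := by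
  rw [← sub_eq_zero, ← Module.forall_dual_apply_eq_zero_iff k]
  intro g
  rw [map_sub, h, sub_self]

end helpers

/-- If a finitely generated projective Hopf `k`-algebra `H` is a Frobenius algebra
(`H ≅ H*` as right `H`-modules), then `H` is an FH-algebra: there is a left integral
`φ ∈ H*` which is a Frobenius homomorphism and which freely generates the space of left
integrals in `H*` (so that space is free of rank 1). -/
theorem frobenius_hopf_is_FH (k H : Type*) [CommRing k] [Ring H] [HopfAlgebra k H]
    [Module.Finite k H] [Module.Projective k H]
    (hFrob : ∃ Φ : H ≃ₗ[k] Module.Dual k H, ∀ a x z : H, Φ (x * a) z = Φ x (a * z)) :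
    ∃ φ : Module.Dual k H,
      (∀ g : Module.Dual k H, conv k H g φ = g 1 • φ) ∧
      Function.Bijective (fun a : H => φ ∘ₗ LinearMap.mulLeft k a) ∧
      (∀ f : Module.Dual k H,
        (∀ g : Module.Dual k H, conv k H g f = g 1 • f) → ∃! c : k, f = c • φ) := by
  classical
  obtain ⟨Φ, hΦ⟩ := hFrob
  set ψ := Φ 1 with hψ
  have hΦ1 : ∀ x z, Φ x z = ψ (x * z) := fun x z => by
    have := hΦ x 1 z
    rwa [one_mul] at this
  obtain ⟨t, ht⟩ := Φ.surjective (counit : Module.Dual k H)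
  have htint : ∀ a, t * a = counit (R := k) a • t := by
    intro a
    apply Φ.injective
    ext z
    rw [hΦ, map_smul, ht]
    simp
  have hψt : ψ t = 1 := by
    have := hΦ1 t 1
    rw [ht, mul_one] at this
    rw [← this]; simp
  obtain ⟨n, p, q, -, -, hpq⟩ := Module.Finite.exists_comp_eq_id_of_projective k H
  have hsurj : Function.Surjective (th (k := k) t) := by
    have h1 := sum_th (k := k) (fun i => p (Pi.single i 1)) (fun i => LinearMap.proj i ∘ₗ q)
      (by
        intro x
        have h2 : p (q x) = x := LinearMap.congr_fun hpq x
        conv_rhs => rw [← h2, pi_eq_sum_univ' (q x)]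
        simp only [LinearMap.comp_apply, LinearMap.proj_apply, ← map_smul, ← map_sum]) ψ t
    rw [hψt, one_smul] at h1
    intro y
    rw [← one_mul y, ← h1, Finset.sum_mul]
    simp_rw [mul_assoc, ← th_mul t htint, ← map_sum]
    exact ⟨_, rfl⟩
  have hinj : Function.Injective (th (k := k) t) := by
    have := OrzechProperty.injective_of_surjective_endomorphism
      (th (k := k) t ∘ₗ Φ.toLinearMap) (hsurj.comp Φ.surjective)
    intro x y hxy
    obtain ⟨x, rfl⟩ := Φ.surjective x
    obtain ⟨y, rfl⟩ := Φ.surjective y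
    exact congrArg Φ (this hxy)
  obtain ⟨φ, hφ⟩ := hsurj 1
  have hleft : ∀ g : Module.Dual k H, conv k H g φ = g 1 • φ := by
    intro g
    apply hinj
    apply dual_sep (k := k)
    intro h
    rw [apply_th, conv_assoc, ← apply_th, hφ, map_smul, hφ]
    simp [conv, Algebra.TensorProduct.one_def, mul_comm]
  have hR : Function.Surjective (LinearMap.mul k H |>.flip.compr₂ φ) := by
    intro f
    refine ⟨antipode k (th t f), ?_⟩
    apply hinj
    have : (LinearMap.mul k H |>.flip.compr₂ φ) (antipode k (th t f)) =
      φ ∘ₗ LinearMap.mulRight k (antipode k (th t f)) := by ext; simp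
    rw [this, th_mul t htint, hφ, one_mul]
  have hRi : Function.Injective (LinearMap.mul k H |>.flip.compr₂ φ) := by
    have := OrzechProperty.injective_of_surjective_endomorphism
      (Φ.symm.toLinearMap ∘ₗ (LinearMap.mul k H |>.flip.compr₂ φ)) (Φ.symm.surjective.comp hR)
    intro x y hxy
    exact this (congrArg Φ.symm hxy)
  have hφt : φ t = 1 := by
    have h1 := apply_th (counit : Module.Dual k H) φ t
    rw [hφ, hleft] at h1
    simpa using h1.symm
  refine ⟨φ, hleft, ⟨?_, ?_⟩, ?_⟩
  · intro a b hab
    apply dual_sep (k := k)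
    intro g
    obtain ⟨c, rfl⟩ := hR g
    simpa using LinearMap.congr_fun hab c
  · intro f
    let R := LinearEquiv.ofBijective _ ⟨hRi, hR⟩
    refine ⟨(Module.evalEquiv k H).symm (f ∘ₗ R.symm.toLinearMap), ?_⟩
    ext b
    have h1 := Module.apply_evalEquiv_symm_apply k H (R b) (f ∘ₗ R.symm.toLinearMap)
    rw [LinearMap.comp_apply, LinearEquiv.coe_coe, LinearEquiv.symm_apply_apply] at h1
    exact h1
  · intro f hf
    refine ⟨f t, ?_, ?_⟩
    · apply hinj
      apply dual_sep (k := k)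
      intro g
      rw [apply_th, hf, map_smul, hφ]
      simp [mul_comm]
    · intro c hc
      simp [hc, hφt]
end

section
/- Radford's formula: If H is a finitely generated projective Hopf algebra over a commutative ring k, with left distinguished group-like elements b ∈ H and m ∈ H*, then S⁴(a) = b⁻¹ (m ⇀ a ↼ m⁻¹) b for every a ∈ H. -/
open scoped TensorProduct

namespace RadfordAux

open Coalgebra HopfAlgebra

section
variable {k H P : Type*} [CommRing k] [Ring H] [HopfAlgebra k H]
    [AddCommGroup P] [Module k P]

/-- `Σ S(x₁) x₂ ⊗ x₃ = 1 ⊗ x`. -/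
lemma sum_antipode_mul_comul (x : H) :
    ∑ i ∈ (ℛ k x).index, (antipode k ((ℛ k x).left i) ⊗ₜ[k] (1 : H)) *
      comul (R := k) ((ℛ k x).right i) = (1 : H) ⊗ₜ[k] x := by
  have h := congrArg (fun t => LinearMap.rTensor H (LinearMap.mul' k H ∘ₗ
    LinearMap.rTensor H (antipode k)) ((TensorProduct.assoc k H H H).symm t))
    (sum_tmul_tmul_eq (ℛ k x) (fun i => ℛ k ((ℛ k x).left i)) (fun i => ℛ k ((ℛ k x).right i)))
  simp only [map_sum, TensorProduct.assoc_symm_tmul, LinearMap.rTensor_tmul,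
    LinearMap.comp_apply, LinearMap.mul'_apply] at h
  calc _ = ∑ i ∈ (ℛ k x).index, ∑ j ∈ (ℛ k ((ℛ k x).right i)).index,
        (antipode k ((ℛ k x).left i) * (ℛ k ((ℛ k x).right i)).left j) ⊗ₜ[k]
          (ℛ k ((ℛ k x).right i)).right j := by
        refine Finset.sum_congr rfl fun i _ => ?_
        rw [← (ℛ k ((ℛ k x).right i)).eq, Finset.mul_sum]
        simp [Algebra.TensorProduct.tmul_mul_tmul]
    _ = _ := h.symm
    _ = ∑ i ∈ (ℛ k x).index, (1 : H) ⊗ₜ[k] (counit (R := k) ((ℛ k x).left i) • (ℛ k x).right i) := by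
        refine Finset.sum_congr rfl fun i _ => ?_
        rw [← TensorProduct.sum_tmul, sum_antipode_mul_eq_smul, TensorProduct.smul_tmul]
    _ = _ := by rw [← TensorProduct.tmul_sum, sum_counit_smul]

lemma sum_smul_counit (x : H) :
    ∑ i ∈ (ℛ k x).index, counit (R := k) ((ℛ k x).right i) • (ℛ k x).left i = x := by
  have := congrArg (TensorProduct.rid k H) (sum_tmul_counit_eq (ℛ k x))
  simpa only [map_sum, TensorProduct.rid_tmul, one_smul] using this

/-- `Σ y₁ ⊗ y₂ S(y₃) = y ⊗ 1`. -/
lemma sum_comul_mul_antipode (x : H) :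
    ∑ i ∈ (ℛ k x).index, comul (R := k) ((ℛ k x).left i) *
      ((1 : H) ⊗ₜ[k] antipode k ((ℛ k x).right i)) = x ⊗ₜ[k] (1 : H) := by
  have h := congrArg (LinearMap.lTensor H (LinearMap.mul' k H ∘ₗ
    LinearMap.lTensor H (antipode k)))
    (sum_tmul_tmul_eq (ℛ k x) (fun i => ℛ k ((ℛ k x).left i)) (fun i => ℛ k ((ℛ k x).right i)))
  simp only [map_sum, LinearMap.lTensor_tmul,
    LinearMap.comp_apply, LinearMap.mul'_apply] at h
  calc _ = ∑ i ∈ (ℛ k x).index, ∑ j ∈ (ℛ k ((ℛ k x).left i)).index,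
        (ℛ k ((ℛ k x).left i)).left j ⊗ₜ[k]
          ((ℛ k ((ℛ k x).left i)).right j * antipode k ((ℛ k x).right i)) := by
        refine Finset.sum_congr rfl fun i _ => ?_
        rw [← (ℛ k ((ℛ k x).left i)).eq, Finset.sum_mul]
        simp [Algebra.TensorProduct.tmul_mul_tmul]
    _ = _ := h
    _ = ∑ i ∈ (ℛ k x).index, (counit (R := k) ((ℛ k x).right i) • (ℛ k x).left i) ⊗ₜ[k] (1 : H) := by
        refine Finset.sum_congr rfl fun i _ => ?_
        rw [← TensorProduct.tmul_sum, sum_mul_antipode_eq_smul, TensorProduct.smul_tmul]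
    _ = _ := by rw [← TensorProduct.sum_tmul, sum_smul_counit]

/-- `u ⊗ v ↦ g(u) ψ(v)`. -/
noncomputable def Phi (ψ : H →ₗ[k] P) (g : Module.Dual k H) : H ⊗[k] H →ₗ[k] P :=
  (TensorProduct.lid k P).toLinearMap ∘ₗ TensorProduct.map g ψ

/-- `u ⊗ v ↦ g(v) ψ(u)`. -/
noncomputable def Psi (ψ : H →ₗ[k] P) (g : Module.Dual k H) : H ⊗[k] H →ₗ[k] P :=
  (TensorProduct.rid k P).toLinearMap ∘ₗ TensorProduct.map ψ g

@[simp] lemma Phi_tmul (ψ : H →ₗ[k] P) (g : Module.Dual k H) (u v : H) :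
    Phi ψ g (u ⊗ₜ v) = g u • ψ v := by simp [Phi]

@[simp] lemma Psi_tmul (ψ : H →ₗ[k] P) (g : Module.Dual k H) (u v : H) :
    Psi ψ g (u ⊗ₜ v) = g v • ψ u := by simp [Psi]

lemma Phi_mul (ψ : H →ₗ[k] P) (g : Module.Dual k H) (c : H) (t : H ⊗[k] H) :
    Phi ψ g ((c ⊗ₜ[k] (1 : H)) * t) = Phi ψ (g ∘ₗ LinearMap.mulLeft k c) t := by
  induction t with
  | zero => simp
  | tmul u v => simp
  | add s t hs ht => simp only [mul_add, map_add, hs, ht]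

lemma Psi_mul (ψ : H →ₗ[k] P) (g : Module.Dual k H) (c : H) (t : H ⊗[k] H) :
    Psi ψ g (t * ((1 : H) ⊗ₜ[k] c)) = Psi ψ (g ∘ₗ LinearMap.mulRight k c) t := by
  induction t with
  | zero => simp
  | tmul u v => simp
  | add s t hs ht => simp only [add_mul, map_add, hs, ht]

variable (ψ : H →ₗ[k] P)

/-- `Σ g(y₁) ψ(x y₂) = Σ g(S(x₁)) ψ(x₂ y)`. -/
lemma left_integral
    (hint : ∀ a : H, (LinearMap.lTensor H ψ) (comul (R := k) a) = 1 ⊗ₜ[k] ψ a)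
    (g : Module.Dual k H) (x y : H) :
    ∑ i ∈ (ℛ k y).index, g ((ℛ k y).left i) • ψ (x * (ℛ k y).right i) =
    ∑ i ∈ (ℛ k x).index, g (antipode k ((ℛ k x).left i)) • ψ ((ℛ k x).right i * y) := by
  have hΦ : ∀ (g : Module.Dual k H) (a : H), Phi ψ g (comul (R := k) a) = g 1 • ψ a := by
    intro g a
    have := congrArg (fun t => TensorProduct.lid k P (LinearMap.rTensor P g t)) (hint a)
    simp only [LinearMap.rTensor_tmul, TensorProduct.lid_tmul] at this
    rw [← this, ← LinearMap.comp_apply (LinearMap.rTensor P g), LinearMap.rTensor_comp_lTensor]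
    rfl
  calc _ = Phi ψ g (((1 : H) ⊗ₜ[k] x) * comul (R := k) y) := by
        rw [← (ℛ k y).eq, Finset.mul_sum, map_sum]
        simp
    _ = _ := by
        rw [← sum_antipode_mul_comul, Finset.sum_mul, map_sum]
        refine Finset.sum_congr rfl fun i _ => ?_
        rw [mul_assoc, ← Bialgebra.comul_mul, Phi_mul, hΦ]
        simp

/-- `Σ g(x₂) ψ(x₁ y) = Σ g(b S(y₂)) ψ(x y₁)`. -/
lemma right_integral (b : H)
    (hb : ∀ (f : Module.Dual k H) (x : H),
      (TensorProduct.rid k P) ((TensorProduct.map ψ f) (comul (R := k) x)) = f b • ψ x)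
    (g : Module.Dual k H) (x y : H) :
    ∑ i ∈ (ℛ k x).index, g ((ℛ k x).right i) • ψ ((ℛ k x).left i * y) =
    ∑ i ∈ (ℛ k y).index, g (b * antipode k ((ℛ k y).right i)) • ψ (x * (ℛ k y).left i) := by
  have hΨ : ∀ (g : Module.Dual k H) (a : H), Psi ψ g (comul (R := k) a) = g b • ψ a := hb
  calc _ = Psi ψ g (comul (R := k) x * (y ⊗ₜ[k] (1 : H))) := by
        rw [← (ℛ k x).eq, Finset.sum_mul, map_sum]
        simp
    _ = _ := by
        rw [← sum_comul_mul_antipode, Finset.mul_sum, map_sum]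
        refine Finset.sum_congr rfl fun i _ => ?_
        rw [← mul_assoc, ← Bialgebra.comul_mul, Psi_mul, hΨ]
        simp

lemma dual_ext [Module.Projective k H] {u v : H} (h : ∀ g : Module.Dual k H, g u = g v) :
    u = v := by
  rw [← sub_eq_zero, ← Module.forall_dual_apply_eq_zero_iff k]
  intro g
  rw [map_sub, h, sub_self]

variable (ν : H ≃ₐ[k] H)

lemma nondeg (hFrob : Function.Injective (fun a : H => ψ ∘ₗ LinearMap.mulRight k a))
    (hν : ∀ x a : H, ψ (x * a) = ψ (ν a * x)) {u v : H}
    (h : ∀ x, ψ (u * x) = ψ (v * x)) : u = v := by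
  have : ν.symm u = ν.symm v := by
    apply hFrob
    ext x
    change ψ (x * ν.symm u) = ψ (x * ν.symm v)
    rw [hν x (ν.symm u), hν x (ν.symm v)]
    simpa using h x
  simpa using this

/-- `ν(y) = Σ m(y₁) b S(b S(y₂))`. -/
lemma nu_right [Module.Projective k H]
    (hFrob : Function.Injective (fun a : H => ψ ∘ₗ LinearMap.mulRight k a))
    (hν : ∀ x a : H, ψ (x * a) = ψ (ν a * x)) (b : H)
    (hb : ∀ (f : Module.Dual k H) (x : H),
      (TensorProduct.rid k P) ((TensorProduct.map ψ f) (comul (R := k) x)) = f b • ψ x)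
    (y : H) :
    ν y = ∑ i ∈ (ℛ k y).index, counit (R := k) (ν ((ℛ k y).left i)) •
      (b * antipode k (b * antipode k ((ℛ k y).right i))) := by
  apply dual_ext (k := k)
  intro g
  have key : ∑ i ∈ (ℛ k (ν y)).index, g ((ℛ k (ν y)).right i) • (ℛ k (ν y)).left i =
      ∑ i ∈ (ℛ k y).index, g (b * antipode k (b * antipode k ((ℛ k y).right i))) •
        ν ((ℛ k y).left i) := by
    apply nondeg ψ ν hFrob hν
    intro x
    simp only [Finset.sum_mul, map_sum, smul_mul_assoc, map_smul]
    rw [right_integral ψ b hb g (ν y) x]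
    have := right_integral ψ b hb (g ∘ₗ LinearMap.mulLeft k b ∘ₗ antipode k) x y
    simp only [LinearMap.comp_apply, LinearMap.mulLeft_apply] at this
    simp only [← hν]
    exact this
  have := congrArg (counit (R := k)) key
  simp only [map_sum, map_smul, smul_eq_mul] at this ⊢
  conv_lhs => rw [← sum_counit_smul (ℛ k (ν y))]
  simp only [map_sum, map_smul, smul_eq_mul]
  simpa only [mul_comm] using this

/-- `S²(ν(y)) = Σ y₁ m(y₂)`. -/
lemma nu_left [Module.Projective k H]
    (hFrob : Function.Injective (fun a : H => ψ ∘ₗ LinearMap.mulRight k a))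
    (hν : ∀ x a : H, ψ (x * a) = ψ (ν a * x))
    (hint : ∀ a : H, (LinearMap.lTensor H ψ) (comul (R := k) a) = 1 ⊗ₜ[k] ψ a)
    (y : H) :
    antipode k (antipode k (ν y)) = ∑ i ∈ (ℛ k y).index,
      counit (R := k) (ν ((ℛ k y).right i)) • (ℛ k y).left i := by
  apply dual_ext (k := k)
  intro g
  have key : ∑ i ∈ (ℛ k (ν y)).index, g (antipode k (antipode k ((ℛ k (ν y)).left i))) •
        (ℛ k (ν y)).right i =
      ∑ i ∈ (ℛ k y).index, g ((ℛ k y).left i) • ν ((ℛ k y).right i) := by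
    apply nondeg ψ ν hFrob hν
    intro x
    simp only [Finset.sum_mul, map_sum, smul_mul_assoc, map_smul]
    have h1 := left_integral ψ hint (g ∘ₗ antipode k) (ν y) x
    simp only [LinearMap.comp_apply] at h1
    rw [← h1]
    simp only [← hν]
    exact (left_integral ψ hint g x y).symm
  have := congrArg (counit (R := k)) key
  simp only [map_sum, map_smul, smul_eq_mul] at this ⊢
  conv_lhs => rw [← sum_smul_counit (k := k) (ν y)]
  simp only [map_sum, map_smul, smul_eq_mul]
  simpa only [mul_comm] using this

/-- `f ⇀ a = Σ a₁ f(a₂)`. -/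
noncomputable def hitL (f : Module.Dual k H) : H →ₗ[k] H :=
  (TensorProduct.rid k H).toLinearMap ∘ₗ LinearMap.lTensor H f ∘ₗ comul

/-- `a ↼ f = Σ f(a₁) a₂`. -/
noncomputable def hitR (f : Module.Dual k H) : H →ₗ[k] H :=
  (TensorProduct.lid k H).toLinearMap ∘ₗ LinearMap.rTensor H f ∘ₗ comul

lemma hitL_apply (f : Module.Dual k H) (a : H) :
    hitL f a = ∑ i ∈ (ℛ k a).index, f ((ℛ k a).right i) • (ℛ k a).left i := by
  simp [hitL, ← (ℛ k a).eq]

lemma hitR_apply (f : Module.Dual k H) (a : H) :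
    hitR f a = ∑ i ∈ (ℛ k a).index, f ((ℛ k a).left i) • (ℛ k a).right i := by
  simp [hitR, ← (ℛ k a).eq]

lemma hit_comm (f g : Module.Dual k H) (a : H) :
    hitL f (hitR g a) = hitR g (hitL f a) := by
  have h := congrArg (fun t => TensorProduct.lid k H (TensorProduct.map g
      ((TensorProduct.rid k H).toLinearMap ∘ₗ LinearMap.lTensor H f) t))
    (sum_tmul_tmul_eq (ℛ k a) (fun i => ℛ k ((ℛ k a).left i)) (fun i => ℛ k ((ℛ k a).right i)))
  simp only [map_sum, TensorProduct.map_tmul, LinearMap.comp_apply, LinearMap.lTensor_tmul,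
    LinearEquiv.coe_coe, TensorProduct.rid_tmul, TensorProduct.lid_tmul] at h
  rw [hitR_apply g a, hitL_apply f a]
  simp only [map_sum, map_smul, hitL_apply, hitR_apply, Finset.smul_sum]
  rw [← h]
  exact Finset.sum_congr rfl fun i _ => Finset.sum_congr rfl fun j _ => smul_comm _ _ _

lemma hitR_hitR (f : H →ₐ[k] k) (a : H) :
    hitR f.toLinearMap (hitR (f.toLinearMap ∘ₗ antipode k) a) = a := by
  have h := congrArg (fun t => TensorProduct.lid k H (TensorProduct.map
      (f.toLinearMap ∘ₗ antipode k)
      ((TensorProduct.lid k H).toLinearMap ∘ₗ LinearMap.rTensor H f.toLinearMap) t))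
    (sum_tmul_tmul_eq (ℛ k a) (fun i => ℛ k ((ℛ k a).left i)) (fun i => ℛ k ((ℛ k a).right i)))
  simp only [map_sum, TensorProduct.map_tmul, LinearMap.comp_apply, LinearMap.rTensor_tmul,
    LinearEquiv.coe_coe, TensorProduct.lid_tmul, AlgHom.toLinearMap_apply] at h
  rw [hitR_apply _ a]
  simp only [map_sum, map_smul, hitR_apply, Finset.smul_sum, LinearMap.comp_apply,
    AlgHom.toLinearMap_apply]
  rw [← h]
  conv_rhs => rw [← sum_counit_smul (ℛ k a)]
  refine Finset.sum_congr rfl fun i _ => ?_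
  simp only [smul_smul, ← Finset.sum_smul, ← map_mul, ← map_sum]
  rw [sum_antipode_mul_eq_smul]
  simp

end

end RadfordAux



/-- Radford's formula for a finitely generated projective Hopf algebra `H` over a
commutative ring `k`. Here `ψ : H → P` is the Frobenius homomorphism of the `P`-Frobenius
structure of `H` (left-integral-like), `ν` its Nakayama automorphism, `m = ε ∘ ν ∈ H*` the
left modular function of `H`, and `b ∈ H` the left distinguished group-like element of
`H`, characterized by `ψ·f = f(b) ψ` for all `f ∈ H*` (that is,
`Σ ψ(x₍₁₎) f(x₍₂₎) = f(b) ψ(x)`). Then `S⁴(a) = b⁻¹ (m ⇀ a ↼ m⁻¹) b`, where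
`m ⇀ a = Σ a₍₁₎ m(a₍₂₎)`, `a ↼ m⁻¹ = Σ m(S(a₍₁₎)) a₍₂₎` (`m⁻¹ = m ∘ S`). -/
theorem radford_formula (k H P : Type*) [CommRing k] [Ring H] [HopfAlgebra k H]
    [Module.Finite k H] [Module.Projective k H]
    [AddCommGroup P] [Module k P]
    (ψ : H →ₗ[k] P)
    (hFrob : Function.Bijective (fun a : H => ψ ∘ₗ LinearMap.mulRight k a))
    (hint : ∀ a : H, (LinearMap.lTensor H ψ) (Coalgebra.comul (R := k) a) = 1 ⊗ₜ[k] ψ a)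
    (ν : H ≃ₐ[k] H)
    (hν : ∀ x a : H, ψ (x * a) = ψ (ν a * x))
    (b : Hˣ)
    (hbg : Coalgebra.comul (R := k) (↑b : H) = (↑b : H) ⊗ₜ[k] (↑b : H))
    (hbc : Coalgebra.counit (R := k) (↑b : H) = 1)
    (hb : ∀ (f : Module.Dual k H) (x : H),
      (TensorProduct.rid k P) ((TensorProduct.map ψ f) (Coalgebra.comul (R := k) x))
        = f ↑b • ψ x)
    (a : H) :
    HopfAlgebra.antipode (R := k) (HopfAlgebra.antipode (R := k)
        (HopfAlgebra.antipode (R := k) (HopfAlgebra.antipode (R := k) a)))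
      = ↑b⁻¹ *
        ((TensorProduct.lid k H)
          ((LinearMap.rTensor H
              ((Coalgebra.counit (R := k) ∘ₗ ν.toLinearMap) ∘ₗ HopfAlgebra.antipode (R := k)))
            (Coalgebra.comul (R := k)
              ((TensorProduct.rid k H)
                ((LinearMap.lTensor H (Coalgebra.counit (R := k) ∘ₗ ν.toLinearMap))
                  (Coalgebra.comul (R := k) a)))))) * ↑b := by
  have hS : ∀ x y : H, HopfAlgebra.antipode k (x * y) =
      HopfAlgebra.antipode k y * HopfAlgebra.antipode k x :=
    HopfAlgebra.antipode_mul_antidistrib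
  have hgl : IsGroupLikeElem k (b : H) := ⟨hbc, hbg⟩
  have hSb : HopfAlgebra.antipode k (b : H) = ↑b⁻¹ :=
    (Units.inv_eq_of_mul_eq_one_left hgl.antipode_mul_cancel).symm
  have hSb' : HopfAlgebra.antipode k (↑b⁻¹ : H) = b := by
    rw [← hSb, hgl.antipode_antipode]
  let f : H →ₐ[k] k := (Bialgebra.counitAlgHom k H).comp ν.toAlgHom
  have main : ∀ y : H, RadfordAux.hitL f.toLinearMap y = ↑b *
      HopfAlgebra.antipode k (HopfAlgebra.antipode k (HopfAlgebra.antipode k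
        (HopfAlgebra.antipode k (RadfordAux.hitR f.toLinearMap y)))) * ↑b⁻¹ := by
    intro y
    have h1 := RadfordAux.nu_left ψ ν hFrob.1 hν hint y
    rw [RadfordAux.nu_right ψ ν hFrob.1 hν b hb y] at h1
    rw [RadfordAux.hitL_apply, RadfordAux.hitR_apply]
    refine h1.symm.trans ?_
    simp only [map_sum, map_smul, Finset.mul_sum, Finset.sum_mul, hS, hSb, hSb',
      mul_smul_comm, smul_mul_assoc, ← mul_assoc]
    rfl
  have h2 := main (RadfordAux.hitR (f.toLinearMap ∘ₗ HopfAlgebra.antipode k) a)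
  rw [RadfordAux.hitR_hitR, RadfordAux.hit_comm] at h2
  change _ = ↑b⁻¹ * (RadfordAux.hitR (f.toLinearMap ∘ₗ HopfAlgebra.antipode k)
    (RadfordAux.hitL f.toLinearMap a)) * ↑b
  rw [h2]
  simp [mul_assoc]
end
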